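/- Assume (Φ1), (Φ2), (Φ3), the symmetry a(x,y,t) = a(y,x,t), the growth conditions (f₁): |f(x,t)| ≤ c₁|t|^{q(x)−1} and (f₂): F(x,t) ≥ c₂|t|^{q(x)} with constants c₁, c₂ > 0, and q⁺ < φ⁻. Assume furthermore the continuous embedding: there is c > 0 with ‖u‖_{q(·)} ≤ c·‖u‖ for all u ∈ X, and the compact embedding: every sequence (u_n) ⊂ X with sup_n ‖u_n‖ < ∞ admits a subsequence (u_{n_k}) and u ∈ X with ∫_Ω |u_{n_k}(x) − u(x)|^{q(x)} dx → 0. Then there exists λ_* > 0 such that for every λ ∈ (0, λ_*) there is u ∈ X with u not almost everywhere 0, J_λ(u) < 0, and A_s(u,v) = λ·∫_Ω f(x,u(x))·v(x) dx for every v ∈ X (i.e., u is a nontrivial weak solution of the Neumann–Robin problem (𝒫_a)). -/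

import Mathlib

open MeasureTheory Set Filter
open scoped ENNReal

noncomputable section

abbrev Eucl (N : ℕ) := EuclideanSpace ℝ (Fin N)

variable {N : ℕ}

/-- `Q = ℝ^{2N} \ (CΩ)^2`. -/
def Qset (Ω : Set (Eucl N)) : Set (Eucl N × Eucl N) := (Ωᶜ ×ˢ Ωᶜ)ᶜ

/-- `φ_{x,y}(t) = a(x,y,|t|) t` for `t ≠ 0`, `φ_{x,y}(0) = 0`. -/
def phiF (a : Eucl N → Eucl N → ℝ → ℝ) (x y : Eucl N) (t : ℝ) : ℝ :=
  if t = 0 then 0 else a x y |t| * t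

/-- `Φ_{x,y}(t) = ∫₀ᵗ φ_{x,y}(τ) dτ`. -/
def PhiF (a : Eucl N → Eucl N → ℝ → ℝ) (x y : Eucl N) (t : ℝ) : ℝ :=
  ∫ τ in (0:ℝ)..t, phiF a x y τ

/-- Gagliardo-type modular on `Q` at scale `lam`. -/
def modQ (a : Eucl N → Eucl N → ℝ → ℝ) (s : ℝ) (Ω : Set (Eucl N))
    (u : Eucl N → ℝ) (lam : ℝ) : ℝ≥0∞ :=
  ∫⁻ p in Qset Ω, ENNReal.ofReal
    (PhiF a p.1 p.2 (|u p.1 - u p.2| / (lam * dist p.1 p.2 ^ s)) / dist p.1 p.2 ^ (N : ℝ))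

/-- Gagliardo-type modular on `Ω × Ω` at scale `lam`. -/
def modOO (a : Eucl N → Eucl N → ℝ → ℝ) (s : ℝ) (Ω : Set (Eucl N))
    (u : Eucl N → ℝ) (lam : ℝ) : ℝ≥0∞ :=
  ∫⁻ p in Ω ×ˢ Ω, ENNReal.ofReal
    (PhiF a p.1 p.2 (|u p.1 - u p.2| / (lam * dist p.1 p.2 ^ s)) / dist p.1 p.2 ^ (N : ℝ))

/-- modular `∫_Ω Φ̂_x(|u|/λ)`. -/
def modO (a : Eucl N → Eucl N → ℝ → ℝ) (Ω : Set (Eucl N))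
    (u : Eucl N → ℝ) (lam : ℝ) : ℝ≥0∞ :=
  ∫⁻ x in Ω, ENNReal.ofReal (PhiF a x x (|u x| / lam))

/-- modular `∫_{CΩ} β Φ̂_x(|u|/λ)`. -/
def modB (a : Eucl N → Eucl N → ℝ → ℝ) (Ω : Set (Eucl N)) (β : Eucl N → ℝ)
    (u : Eucl N → ℝ) (lam : ℝ) : ℝ≥0∞ :=
  ∫⁻ x in Ωᶜ, ENNReal.ofReal (β x * PhiF a x x (|u x| / lam))

/-- Luxemburg infimum of a modular family (`∞` if no admissible `λ`). -/
def lux (m : ℝ → ℝ≥0∞) : ℝ≥0∞ :=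
  sInf {l : ℝ≥0∞ | ∃ lam : ℝ, 0 < lam ∧ l = ENNReal.ofReal lam ∧ m lam ≤ 1}

/-- `‖u‖_X = [u]_{s,Φ,Q} + ‖u‖_{Φ̂} + ‖u‖_{Φ̂,β,CΩ}`. -/
def normX (a : Eucl N → Eucl N → ℝ → ℝ) (s : ℝ) (Ω : Set (Eucl N)) (β : Eucl N → ℝ)
    (u : Eucl N → ℝ) : ℝ≥0∞ :=
  lux (modQ a s Ω u) + lux (modO a Ω u) + lux (modB a Ω β u)

/-- the modular `ρ_s`. -/
def rhoS (a : Eucl N → Eucl N → ℝ → ℝ) (s : ℝ) (Ω : Set (Eucl N)) (β : Eucl N → ℝ)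
    (u : Eucl N → ℝ) : ℝ≥0∞ :=
  modQ a s Ω u 1 + modO a Ω u 1 + modB a Ω β u 1

/-- the modular norm `‖u‖ = inf {λ > 0 : ρ_s(u/λ) ≤ 1}`. -/
def normM (a : Eucl N → Eucl N → ℝ → ℝ) (s : ℝ) (Ω : Set (Eucl N)) (β : Eucl N → ℝ)
    (u : Eucl N → ℝ) : ℝ≥0∞ :=
  sInf {l : ℝ≥0∞ | ∃ lam : ℝ, 0 < lam ∧ l = ENNReal.ofReal lam ∧
    rhoS a s Ω β (fun x => u x / lam) ≤ 1}

/-- `X` described via the norm `‖·‖_X`. -/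
def XsetX (a : Eucl N → Eucl N → ℝ → ℝ) (s : ℝ) (Ω : Set (Eucl N)) (β : Eucl N → ℝ) :
    Set (Eucl N → ℝ) :=
  {u | Measurable u ∧ normX a s Ω β u < ⊤}

/-- `X` described via the modular norm `‖·‖`. -/
def XsetM (a : Eucl N → Eucl N → ℝ → ℝ) (s : ℝ) (Ω : Set (Eucl N)) (β : Eucl N → ℝ) :
    Set (Eucl N → ℝ) :=
  {u | Measurable u ∧ (∃ lam : ℝ, 0 < lam ∧ rhoS a s Ω β (fun x => u x / lam) < ⊤) ∧
    normM a s Ω β u < ⊤}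

/-- the fractional difference quotient `D^s u`. -/
def Du (s : ℝ) (u : Eucl N → ℝ) (p : Eucl N × Eucl N) : ℝ :=
  (u p.1 - u p.2) / dist p.1 p.2 ^ s

/-- `a(x,y,|D^s u|) D^s u`, with the convention that it vanishes when `u x = u y`. -/
def Ku (a : Eucl N → Eucl N → ℝ → ℝ) (s : ℝ) (u : Eucl N → ℝ) (p : Eucl N × Eucl N) : ℝ :=
  if u p.1 = u p.2 then 0 else a p.1 p.2 |Du s u p| * Du s u p

/-- the form `A_s(u,v)`. -/
def Aform (a : Eucl N → Eucl N → ℝ → ℝ) (s : ℝ) (Ω : Set (Eucl N)) (β : Eucl N → ℝ)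
    (u v : Eucl N → ℝ) : ℝ :=
  (1/2) * (∫ p in Qset Ω, Ku a s u p * Du s v p / dist p.1 p.2 ^ (N : ℝ))
  + (∫ x in Ω, a x x |u x| * u x * v x)
  + ∫ x in Ωᶜ, β x * (a x x |u x| * u x * v x)

/-- the nonlocal normal derivative `𝒩^s_a u` on `CΩ`. -/
def Nop (a : Eucl N → Eucl N → ℝ → ℝ) (s : ℝ) (Ω : Set (Eucl N)) (u : Eucl N → ℝ)
    (x : Eucl N) : ℝ :=
  ∫ y in Ω, Ku a s u (x, y) / dist x y ^ ((N : ℝ) + s)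

/-- `F(x,t) = ∫₀ᵗ f(x,τ) dτ`. -/
def Ff (f : Eucl N → ℝ → ℝ) (x : Eucl N) (t : ℝ) : ℝ := ∫ τ in (0:ℝ)..t, f x τ

/-- the energy functional `J_λ`. -/
def Jlam (a : Eucl N → Eucl N → ℝ → ℝ) (s : ℝ) (Ω : Set (Eucl N)) (β : Eucl N → ℝ)
    (f : Eucl N → ℝ → ℝ) (lam : ℝ) (u : Eucl N → ℝ) : ℝ :=
  (1/2) * (modQ a s Ω u 1).toReal + (modO a Ω u 1).toReal + (modB a Ω β u 1).toReal
    - lam * ∫ x in Ω, Ff f x (u x)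

/-- the variable-exponent Luxemburg norm `‖u‖_{q(·)}` on `Ω`. -/
def normq (Ω : Set (Eucl N)) (q : Eucl N → ℝ) (u : Eucl N → ℝ) : ℝ≥0∞ :=
  sInf {l : ℝ≥0∞ | ∃ lam : ℝ, 0 < lam ∧ l = ENNReal.ofReal lam ∧
    (∫⁻ x in Ω, ENNReal.ofReal (|u x / lam| ^ q x)) ≤ 1}

/-!
The weak solution is a global minimiser of `J_λ`, found by the direct method. The three terms of
the modular form a single one: on the space of pairs `(x, y)` put the difference quotient `D^s u`
off the diagonal and `u` itself on the diagonal, and let the measure be half the Gagliardo weight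
on `Q`, plus Lebesgue measure on `Ω` and `β dx` on `CΩ` transported to the diagonal. In these terms
`J_λ(u) = ∫ Φ(Tu) dμ - λ ∫_Ω F(x, u) dx` with `T` linear, and the following holds for every `λ > 0`.

* Coercivity: `∫ Φ(Tu) ≤ K` with `1 ≤ K` gives `‖u‖ ≤ C K^{1/φ⁻}`, so that
  `∫_Ω |u|^{q(x)} ≤ C K^{q⁺/φ⁻}` by the embedding, a power `< 1` of `K`.
* Compactness controls a minimising sequence on `Ω` only, but convexity of `t ↦ Φ(√t)` yields
  Clarkson's inequality `∫ Φ((g + h)/2) + ∫ Φ((g - h)/2) ≤ (∫ Φ(g) + ∫ Φ(h))/2`, which makes the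
  images `T u_n` Cauchy in modular; a subsequence then converges a.e., its limit is of the form
  `T u`, and Fatou's lemma shows that `u` is a minimiser.
* The minimum is negative because `t^{q⁺}` dominates `t^{φ⁻}` as `t → 0`, so small multiples of a
  bump function have negative energy. The Euler–Lagrange equation at `u` is the weak formulation.
-/

section Primitive

variable {Y : Type*} {g : Y → ℝ → ℝ} {y : Y}

/-- The family of primitives `t ↦ ∫₀ᵗ g y τ dτ`. Both `Ff f` and, for the family of densities
indexed by pairs of points, `PhiF a` are definitionally of this form. -/
def primitive (g : Y → ℝ → ℝ) (y : Y) (t : ℝ) : ℝ := ∫ τ in (0:ℝ)..t, g y τ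

lemma primitive_zero (g : Y → ℝ → ℝ) (y : Y) : primitive g y 0 = 0 :=
  intervalIntegral.integral_same

lemma hasDerivAt_primitive (hg : Continuous (g y)) (t : ℝ) :
    HasDerivAt (primitive g y) (g y t) t :=
  intervalIntegral.integral_hasDerivAt_right (hg.intervalIntegrable _ _)
    (hg.stronglyMeasurableAtFilter _ _) hg.continuousAt

lemma continuous_primitive (hg : Continuous (g y)) : Continuous (primitive g y) :=
  continuous_iff_continuousAt.2 fun t => (hasDerivAt_primitive hg t).continuousAt

lemma even_primitive (hg : (g y).Odd) : (primitive g y).Even := by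
  intro t
  have h := intervalIntegral.integral_comp_neg (a := 0) (b := t) (g y)
  simp only [hg _, intervalIntegral.integral_neg, neg_zero] at h
  rw [primitive, intervalIntegral.integral_symm, ← h, neg_neg, primitive]

lemma abs_primitive_sub_primitive_le (hg : Continuous (g y)) {C b : ℝ} (hC : 0 ≤ C)
    (hb : 0 ≤ b) (h : ∀ t, |g y t| ≤ C * |t| ^ b) (t₁ t₂ : ℝ) :
    |primitive g y t₁ - primitive g y t₂| ≤ C * (|t₁| + |t₂|) ^ b * |t₁ - t₂| := by
  rw [primitive, primitive, intervalIntegral.integral_interval_sub_left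
    (hg.intervalIntegrable _ _) (hg.intervalIntegrable _ _)]
  refine intervalIntegral.norm_integral_le_of_norm_le_const (f := g y) fun τ hτ =>
    (h τ).trans ?_
  have hτ_le : |τ| ≤ |t₁| + |t₂| := by
    rcases mem_uIoc.1 hτ with ⟨h₁, h₂⟩ | ⟨h₁, h₂⟩ <;>
      exact abs_le.2 ⟨by linarith [neg_abs_le t₁, neg_abs_le t₂, abs_nonneg t₁, abs_nonneg t₂],
        by linarith [le_abs_self t₁, le_abs_self t₂, abs_nonneg t₁, abs_nonneg t₂]⟩
  gcongr

variable [MeasurableSpace Y]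

lemma measurable_uncurry_of_measurable_of_continuous (hm : ∀ t, Measurable fun y => g y t)
    (hc : ∀ y, Continuous (g y)) : Measurable (Function.uncurry g) :=
  (measurable_uncurry_of_continuous_of_measurable (u := fun t y => g y t) hc hm).comp
    measurable_swap

lemma measurable_uncurry_primitive (hg : Measurable (Function.uncurry g))
    (hc : ∀ y, Continuous (g y)) : Measurable (Function.uncurry (primitive g)) := by
  refine measurable_uncurry_of_measurable_of_continuous (fun t => ?_)
    fun y => continuous_primitive (hc y)
  simp only [primitive, intervalIntegral]
  exact hg.stronglyMeasurable.integral_prod_right.measurable.sub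
    hg.stronglyMeasurable.integral_prod_right.measurable

end Primitive

section Convex

variable {h Φ : ℝ → ℝ}

lemma superadditive_of_convexOn_Ici (hh : ConvexOn ℝ (Ici 0) h) (h0 : h 0 = 0) {x y : ℝ}
    (hx : 0 ≤ x) (hy : 0 ≤ y) : h x + h y ≤ h (x + y) := by
  rcases (add_nonneg hx hy).eq_or_lt with hxy | hxy
  · simp [show x = 0 by linarith, show y = 0 by linarith, h0]
  have le_frac_mul : ∀ {z w : ℝ}, 0 ≤ z → 0 ≤ w → z + w = x + y →
      h z ≤ z / (x + y) * h (x + y) := by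
    intro z w hz hw hzw
    have := hh.2 (mem_Ici.2 hxy.le) (mem_Ici.2 le_rfl) (div_nonneg hz hxy.le)
      (div_nonneg hw hxy.le) (by rw [← add_div, hzw, div_self hxy.ne'])
    simpa [h0, div_mul_cancel₀ _ hxy.ne'] using this
  calc h x + h y
      ≤ x / (x + y) * h (x + y) + y / (x + y) * h (x + y) :=
        add_le_add (le_frac_mul hx hy rfl) (le_frac_mul hy hx (add_comm y x))
    _ = h (x + y) := by field_simp

-- Parallelogram law for the squares, then superadditivity and convexity of `t ↦ Φ √t`.
lemma clarkson_of_convexOn_sqrt (heven : Φ.Even) (h0 : Φ 0 = 0)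
    (hconv : ConvexOn ℝ (Ici 0) fun t => Φ √t) (x y : ℝ) :
    Φ ((x + y) / 2) + Φ ((x - y) / 2) ≤ (Φ x + Φ y) / 2 := by
  have hsq : ∀ t, Φ t = Φ √(t ^ 2) := fun t => by
    rw [Real.sqrt_sq_eq_abs]
    rcases abs_choice t with h | h <;> rw [h]
    exact (heven t).symm
  calc Φ ((x + y) / 2) + Φ ((x - y) / 2)
      = Φ √(((x + y) / 2) ^ 2) + Φ √(((x - y) / 2) ^ 2) := by rw [← hsq, ← hsq]
    _ ≤ Φ √(((x + y) / 2) ^ 2 + ((x - y) / 2) ^ 2) :=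
        superadditive_of_convexOn_Ici hconv (by simpa using h0) (sq_nonneg _) (sq_nonneg _)
    _ = Φ √((1 / 2 : ℝ) • x ^ 2 + (1 / 2 : ℝ) • y ^ 2) := by
        congr 2; simp only [smul_eq_mul]; ring
    _ ≤ (1 / 2 : ℝ) • Φ √(x ^ 2) + (1 / 2 : ℝ) • Φ √(y ^ 2) :=
        hconv.2 (mem_Ici.2 (sq_nonneg x)) (mem_Ici.2 (sq_nonneg y)) (by norm_num) (by norm_num)
          (by norm_num)
    _ = (Φ x + Φ y) / 2 := by rw [← hsq, ← hsq, smul_eq_mul, smul_eq_mul]; ring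

end Convex

section MusielakOrlicz

lemma le_rpow_mul_of_mul_rpow_neg_le {A B c t b : ℝ} (hc : 0 < c) (ht : 0 < t)
    (h : A * (c * t) ^ (-b) ≤ B * t ^ (-b)) : A ≤ c ^ b * B := by
  rw [Real.rpow_neg (by positivity), Real.rpow_neg ht.le, ← div_eq_mul_inv, ← div_eq_mul_inv,
    div_le_div_iff₀ (by positivity) (by positivity), Real.mul_rpow hc.le ht.le] at h
  exact le_of_mul_le_mul_right (h.trans_eq (by ring)) (Real.rpow_pos_of_pos ht b)

variable {Y : Type*} [MeasurableSpace Y] {φ : Y → ℝ → ℝ} {p r : ℝ}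

/-- A family of odd increasing densities `φ y` whose primitives `Φ y` form a Musielak–Orlicz
function with the power-type growth condition `p Φ(t) ≤ t φ(t) ≤ r Φ(t)`, stated for `t ≥ 0` and
without a quotient. -/
structure IsMusielakOrlicz (φ : Y → ℝ → ℝ) (p r : ℝ) : Prop where
  measurable : Measurable (Function.uncurry φ)
  odd : ∀ y, (φ y).Odd
  strictMono : ∀ y, StrictMono (φ y)
  continuous : ∀ y, Continuous (φ y)
  mul_primitive_le : ∀ y t, 0 ≤ t → p * primitive φ y t ≤ t * φ y t
  mul_le_mul_primitive : ∀ y t, 0 ≤ t → t * φ y t ≤ r * primitive φ y t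

namespace IsMusielakOrlicz

variable (H : IsMusielakOrlicz φ p r) (y : Y)
include H

lemma pos {t : ℝ} (ht : 0 < t) : 0 < φ y t :=
  (H.odd y).map_zero ▸ H.strictMono y ht

lemma hasDerivAt_primitive (t : ℝ) : HasDerivAt (primitive φ y) (φ y t) t :=
  _root_.hasDerivAt_primitive (H.continuous y) t

lemma primitive_abs (t : ℝ) : primitive φ y |t| = primitive φ y t := by
  rcases abs_choice t with h | h <;> rw [h]
  exact even_primitive (H.odd y) t

lemma strictMonoOn_primitive : StrictMonoOn (primitive φ y) (Ici 0) := by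
  refine strictMonoOn_of_deriv_pos (convex_Ici 0)
    (continuous_primitive (H.continuous y)).continuousOn fun t ht => ?_
  rw [(H.hasDerivAt_primitive y t).deriv]
  exact H.pos y (by simpa using ht)

lemma primitive_pos {t : ℝ} (ht : 0 < t) : 0 < primitive φ y t :=
  primitive_zero φ y ▸ H.strictMonoOn_primitive y self_mem_Ici ht.le ht

lemma primitive_le_primitive {t₁ t₂ : ℝ} (h : |t₁| ≤ |t₂|) :
    primitive φ y t₁ ≤ primitive φ y t₂ := by
  rw [← H.primitive_abs y t₁, ← H.primitive_abs y t₂]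
  exact (H.strictMonoOn_primitive y).monotoneOn (abs_nonneg t₁) (abs_nonneg t₂) h

lemma primitive_nonneg (t : ℝ) : 0 ≤ primitive φ y t :=
  primitive_zero φ y ▸ H.primitive_le_primitive y (by simp)

lemma exponent_pos (y : Y) : 0 < r := by
  have h₁ := H.mul_le_mul_primitive y 1 zero_le_one
  have h₂ := H.pos y one_pos
  exact pos_of_mul_pos_left (by linarith) (H.primitive_nonneg y 1)

lemma hasDerivAt_primitive_mul_rpow (b : ℝ) {t : ℝ} (ht : 0 < t) :
    HasDerivAt (fun t => primitive φ y t * t ^ (-b))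
      (t ^ (-b - 1) * (t * φ y t - b * primitive φ y t)) t := by
  refine ((H.hasDerivAt_primitive y t).mul
    (Real.hasDerivAt_rpow_const (p := -b) (Or.inl ht.ne'))).congr_deriv ?_
  rw [show t ^ (-b) = t ^ (-b - 1) * t by rw [← Real.rpow_add_one ht.ne']; ring_nf]
  ring

lemma monotoneOn_primitive_mul_rpow :
    MonotoneOn (fun t => primitive φ y t * t ^ (-p)) (Ioi 0) := by
  have hderiv := fun t (ht : t ∈ Ioi (0 : ℝ)) => H.hasDerivAt_primitive_mul_rpow y p ht
  refine monotoneOn_of_hasDerivWithinAt_nonneg (convex_Ioi 0)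
    (fun t ht => (hderiv t ht).continuousAt.continuousWithinAt)
    (fun t ht => (hderiv t (interior_subset ht)).hasDerivWithinAt) fun t ht => ?_
  have ht : 0 < t := interior_subset ht
  exact mul_nonneg (by positivity) (sub_nonneg.2 (H.mul_primitive_le y t ht.le))

lemma antitoneOn_primitive_mul_rpow :
    AntitoneOn (fun t => primitive φ y t * t ^ (-r)) (Ioi 0) := by
  have hderiv := fun t (ht : t ∈ Ioi (0 : ℝ)) => H.hasDerivAt_primitive_mul_rpow y r ht
  refine antitoneOn_of_hasDerivWithinAt_nonpos (convex_Ioi 0)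
    (fun t ht => (hderiv t ht).continuousAt.continuousWithinAt)
    (fun t ht => (hderiv t (interior_subset ht)).hasDerivWithinAt) fun t ht => ?_
  have ht : 0 < t := interior_subset ht
  exact mul_nonpos_of_nonneg_of_nonpos (by positivity)
    (sub_nonpos.2 (H.mul_le_mul_primitive y t ht.le))

lemma primitive_mul_le_of_one_le {c : ℝ} (hc : 1 ≤ c) (t : ℝ) :
    primitive φ y (c * t) ≤ c ^ r * primitive φ y t := by
  have hc0 : 0 < c := one_pos.trans_le hc
  rw [← H.primitive_abs y (c * t), ← H.primitive_abs y t, abs_mul, abs_of_pos hc0]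
  rcases (abs_nonneg t).eq_or_lt with ht | ht
  · simp [← ht, primitive_zero]
  · exact le_rpow_mul_of_mul_rpow_neg_le hc0 ht <|
      H.antitoneOn_primitive_mul_rpow y ht (mul_pos hc0 ht) (le_mul_of_one_le_left ht.le hc)

lemma primitive_mul_le_of_le_one {c : ℝ} (hc0 : 0 < c) (hc : c ≤ 1) (t : ℝ) :
    primitive φ y (c * t) ≤ c ^ p * primitive φ y t := by
  rw [← H.primitive_abs y (c * t), ← H.primitive_abs y t, abs_mul, abs_of_pos hc0]
  rcases (abs_nonneg t).eq_or_lt with ht | ht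
  · simp [← ht, primitive_zero]
  · exact le_rpow_mul_of_mul_rpow_neg_le hc0 ht <|
      H.monotoneOn_primitive_mul_rpow y (mul_pos hc0 ht) ht (mul_le_of_le_one_left ht.le hc)

lemma primitive_add_le (t₁ t₂ : ℝ) :
    primitive φ y (|t₁| + |t₂|) ≤ 2 ^ r * (primitive φ y t₁ + primitive φ y t₂) := by
  have h₁ := H.primitive_nonneg y t₁
  have h₂ := H.primitive_nonneg y t₂
  have le_of_abs_le : ∀ t, |t₁| ≤ |t| → |t₂| ≤ |t| →
      primitive φ y (|t₁| + |t₂|) ≤ 2 ^ r * primitive φ y t := by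
    intro t ht₁ ht₂
    refine (H.primitive_le_primitive y (t₂ := 2 * t) ?_).trans
      (H.primitive_mul_le_of_one_le y one_le_two t)
    rw [abs_of_nonneg (by positivity : 0 ≤ |t₁| + |t₂|), abs_mul, abs_two]
    linarith
  rcases le_total |t₁| |t₂| with h | h
  · exact (le_of_abs_le t₂ h le_rfl).trans (by gcongr; linarith)
  · exact (le_of_abs_le t₁ le_rfl h).trans (by gcongr; linarith)

lemma abs_mul_le (t₁ t₂ : ℝ) {e : ℝ} (he : |e| ≤ 1) :
    |φ y (t₁ + e * t₂) * t₂| ≤ r * 2 ^ r * (primitive φ y t₁ + primitive φ y t₂) := by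
  have habs : |t₁ + e * t₂| ≤ |t₁| + |t₂| :=
    (abs_add_le _ _).trans (by rw [abs_mul]; nlinarith [abs_nonneg t₂])
  have hφ : |φ y (t₁ + e * t₂)| ≤ φ y (|t₁| + |t₂|) := by
    obtain ⟨hlo, hhi⟩ := abs_le.1 habs
    rw [abs_le, ← H.odd y]
    exact ⟨(H.strictMono y).monotone hlo, (H.strictMono y).monotone hhi⟩
  have hr := (H.exponent_pos y).le
  calc |φ y (t₁ + e * t₂) * t₂|
      ≤ φ y (|t₁| + |t₂|) * (|t₁| + |t₂|) := by
        rw [abs_mul]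
        exact mul_le_mul hφ (le_add_of_nonneg_left (abs_nonneg _)) (abs_nonneg _)
          ((abs_nonneg _).trans hφ)
    _ ≤ r * primitive φ y (|t₁| + |t₂|) := by
        rw [mul_comm]; exact H.mul_le_mul_primitive y _ (by positivity)
    _ ≤ r * (2 ^ r * (primitive φ y t₁ + primitive φ y t₂)) := by
        gcongr; exact H.primitive_add_le y t₁ t₂
    _ = _ := by ring

lemma measurable_comp {g : Y → ℝ} (hg : Measurable g) : Measurable fun y => φ y (g y) :=
  H.measurable.comp (measurable_id.prodMk hg)

lemma measurable_primitive_comp {g : Y → ℝ} (hg : Measurable g) :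
    Measurable fun y => primitive φ y (g y) :=
  (measurable_uncurry_primitive H.measurable H.continuous).comp (measurable_id.prodMk hg)

end IsMusielakOrlicz

end MusielakOrlicz

section Modular

variable {Y : Type*} [MeasurableSpace Y] {φ : Y → ℝ → ℝ} {p r : ℝ} {μ : Measure Y} {g h : Y → ℝ}

/-- The modular `∫ Φ_y(g y) dμ(y)` associated with the family of densities `φ`. -/
def modular (φ : Y → ℝ → ℝ) (μ : Measure Y) (g : Y → ℝ) : ℝ≥0∞ :=
  ∫⁻ y, ENNReal.ofReal (primitive φ y (g y)) ∂μ

namespace IsMusielakOrlicz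

variable (H : IsMusielakOrlicz φ p r)
include H

lemma modular_mono (hgh : ∀ y, |g y| ≤ |h y|) : modular φ μ g ≤ modular φ μ h :=
  lintegral_mono fun y => ENNReal.ofReal_le_ofReal (H.primitive_le_primitive y (hgh y))

lemma modular_smul_le_of_one_le {c : ℝ} (hc : 1 ≤ c) (g : Y → ℝ) :
    modular φ μ (c • g) ≤ ENNReal.ofReal (c ^ r) * modular φ μ g := by
  rw [modular, modular, ← lintegral_const_mul' _ _ ENNReal.ofReal_ne_top]
  refine lintegral_mono fun y => ?_
  rw [← ENNReal.ofReal_mul (by positivity)]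
  exact ENNReal.ofReal_le_ofReal (H.primitive_mul_le_of_one_le y hc (g y))

lemma modular_smul_le_of_le_one {c : ℝ} (hc0 : 0 < c) (hc : c ≤ 1) (g : Y → ℝ) :
    modular φ μ (c • g) ≤ ENNReal.ofReal (c ^ p) * modular φ μ g := by
  rw [modular, modular, ← lintegral_const_mul' _ _ ENNReal.ofReal_ne_top]
  refine lintegral_mono fun y => ?_
  rw [← ENNReal.ofReal_mul (by positivity)]
  exact ENNReal.ofReal_le_ofReal (H.primitive_mul_le_of_le_one y hc0 hc (g y))

lemma modular_smul_lt_top (c : ℝ) (hg : modular φ μ g < ⊤) : modular φ μ (c • g) < ⊤ := by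
  refine (H.modular_mono (h := (1 + |c|) • g) fun y => ?_).trans_lt <|
    (H.modular_smul_le_of_one_le (by linarith [abs_nonneg c]) g).trans_lt <|
      ENNReal.mul_lt_top ENNReal.ofReal_lt_top hg
  simp only [Pi.smul_apply, smul_eq_mul, abs_mul, abs_of_nonneg (by positivity : 0 ≤ 1 + |c|)]
  gcongr
  linarith

lemma modular_add_le (hg : Measurable g) (h : Y → ℝ) :
    modular φ μ (g + h) ≤ ENNReal.ofReal (2 ^ r) * (modular φ μ g + modular φ μ h) := by
  simp only [modular]
  rw [← lintegral_add_left (H.measurable_primitive_comp hg).ennreal_ofReal,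
    ← lintegral_const_mul' _ _ ENNReal.ofReal_ne_top]
  refine lintegral_mono fun y => ?_
  rw [← ENNReal.ofReal_add (H.primitive_nonneg _ _) (H.primitive_nonneg _ _),
    ← ENNReal.ofReal_mul (by positivity)]
  exact ENNReal.ofReal_le_ofReal <| (H.primitive_le_primitive y
    ((abs_add_le _ _).trans (le_abs_self _))).trans (H.primitive_add_le y (g y) (h y))

variable (μ) in
/-- The Musielak–Orlicz space of the measurable functions of finite modular. -/
def space : Submodule ℝ (Y → ℝ) where
  carrier := {g | Measurable g ∧ modular φ μ g < ⊤}
  zero_mem' := ⟨measurable_const, by simp [modular, primitive_zero]⟩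
  add_mem' := fun {g h} hg hh => ⟨hg.1.add hh.1, (H.modular_add_le hg.1 h).trans_lt <|
    ENNReal.mul_lt_top ENNReal.ofReal_lt_top (ENNReal.add_lt_top.2 ⟨hg.2, hh.2⟩)⟩
  smul_mem' := fun c _ hg => ⟨hg.1.const_smul c, H.modular_smul_lt_top c hg.2⟩

lemma integrable_primitive (hg : g ∈ H.space μ) : Integrable (fun y => primitive φ y (g y)) μ :=
  ⟨(H.measurable_primitive_comp hg.1).aestronglyMeasurable,
    (hasFiniteIntegral_iff_ofReal (.of_forall fun y => H.primitive_nonneg y (g y))).2 hg.2⟩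

lemma toReal_modular (hg : Measurable g) :
    (modular φ μ g).toReal = ∫ y, primitive φ y (g y) ∂μ :=
  (integral_eq_lintegral_of_nonneg_ae (.of_forall fun y => H.primitive_nonneg y (g y))
    (H.measurable_primitive_comp hg).aestronglyMeasurable).symm

lemma toReal_modular_clarkson
    (hconv : ∀ y, ConvexOn ℝ (Ici 0) fun t => primitive φ y √t)
    (hg : g ∈ H.space μ) (hh : h ∈ H.space μ) :
    (modular φ μ ((1 / 2 : ℝ) • (g + h))).toReal + (modular φ μ ((1 / 2 : ℝ) • (g - h))).toReal
      ≤ ((modular φ μ g).toReal + (modular φ μ h).toReal) / 2 := by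
  have hadd := (H.space μ).smul_mem (1 / 2 : ℝ) ((H.space μ).add_mem hg hh)
  have hsub := (H.space μ).smul_mem (1 / 2 : ℝ) ((H.space μ).sub_mem hg hh)
  rw [H.toReal_modular hadd.1, H.toReal_modular hsub.1, H.toReal_modular hg.1,
    H.toReal_modular hh.1, ← integral_add (H.integrable_primitive hadd)
    (H.integrable_primitive hsub), ← integral_add (H.integrable_primitive hg)
    (H.integrable_primitive hh), ← integral_div]
  refine integral_mono ((H.integrable_primitive hadd).add (H.integrable_primitive hsub))
    (((H.integrable_primitive hg).add (H.integrable_primitive hh)).div_const 2) fun y => ?_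
  simpa [div_eq_inv_mul] using clarkson_of_convexOn_sqrt (even_primitive (H.odd y))
    (primitive_zero φ y) (hconv y) (g y) (h y)

lemma integrable_mul (hg : g ∈ H.space μ) (hh : h ∈ H.space μ) :
    Integrable (fun y => φ y (g y) * h y) μ := by
  refine (((H.integrable_primitive hg).add (H.integrable_primitive hh)).const_mul
    (r * 2 ^ r)).mono' ((H.measurable_comp hg.1).mul hh.1).aestronglyMeasurable
    (.of_forall fun y => ?_)
  simpa using H.abs_mul_le y (g y) (h y) (e := 0) (by simp)

lemma hasDerivAt_toReal_modular (hg : g ∈ H.space μ) (hh : h ∈ H.space μ) :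
    HasDerivAt (fun e : ℝ => (modular φ μ (g + e • h)).toReal)
      (∫ y, φ y (g y) * h y ∂μ) 0 := by
  have hmeas : ∀ e : ℝ, Measurable fun y => g y + e * h y :=
    fun e => hg.1.add (hh.1.const_mul e)
  have hderiv := (hasDerivAt_integral_of_dominated_loc_of_deriv_le (μ := μ) (x₀ := (0 : ℝ))
    (F := fun e y => primitive φ y (g y + e * h y))
    (F' := fun e y => φ y (g y + e * h y) * h y)
    (bound := fun y => r * 2 ^ r * (primitive φ y (g y) + primitive φ y (h y)))
    (Metric.closedBall_mem_nhds (0 : ℝ) one_pos)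
    (.of_forall fun e => (H.measurable_primitive_comp (hmeas e)).aestronglyMeasurable)
    (by simpa using H.integrable_primitive hg)
    ((H.measurable_comp (hmeas 0)).mul hh.1).aestronglyMeasurable
    (.of_forall fun y e he => H.abs_mul_le y _ _ (by simpa using he))
    (((H.integrable_primitive hg).add (H.integrable_primitive hh)).const_mul _)
    (.of_forall fun y e _ => (H.hasDerivAt_primitive y _).comp e
      (by simpa using ((hasDerivAt_id e).mul_const (h y)).const_add (g y)))).2
  simp only [zero_mul, add_zero] at hderiv
  exact hderiv.congr_of_eventuallyEq (.of_forall fun e => H.toReal_modular (hmeas e))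

lemma modular_le_liminf {g : ℕ → Y → ℝ} {g' : Y → ℝ} (hg : ∀ i, Measurable (g i))
    (hlim : ∀ᵐ y ∂μ, Tendsto (fun i => g i y) atTop (nhds (g' y))) :
    modular φ μ g' ≤ liminf (fun i => modular φ μ (g i)) atTop := by
  refine (lintegral_mono_ae ?_).trans
    (lintegral_liminf_le fun i => (H.measurable_primitive_comp (hg i)).ennreal_ofReal)
  filter_upwards [hlim] with y hy
  exact (ENNReal.tendsto_ofReal <|
    ((continuous_primitive (H.continuous y)).tendsto _).comp hy).liminf_eq.ge

lemma ae_exists_tendsto_of_tsum_modular {g : ℕ → Y → ℝ} (hg : ∀ i, Measurable (g i))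
    (hsum : ∑' i, modular φ μ ((2 : ℝ) ^ i • (g i - g (i + 1))) ≠ ⊤) :
    ∀ᵐ y ∂μ, ∃ l, Tendsto (fun i => g i y) atTop (nhds l) := by
  have hmeas : ∀ i, Measurable fun y => ENNReal.ofReal
      (primitive φ y (((2 : ℝ) ^ i • (g i - g (i + 1))) y)) := fun i =>
    (H.measurable_primitive_comp
      (((hg i).sub (hg (i + 1))).const_smul ((2 : ℝ) ^ i))).ennreal_ofReal
  simp only [modular] at hsum
  rw [← lintegral_tsum fun i => (hmeas i).aemeasurable] at hsum
  filter_upwards [ae_lt_top (.tsum hmeas) hsum] with y hy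
  have hdist : ∀ᶠ i in atTop, dist (g i y) (g (i + 1) y) ≤ (1 / 2) ^ i := by
    have hΦ1 : 0 < ENNReal.ofReal (primitive φ y 1) :=
      ENNReal.ofReal_pos.2 (H.primitive_pos y one_pos)
    filter_upwards [(ENNReal.tendsto_atTop_zero_of_tsum_ne_top hy.ne).eventually_lt_const hΦ1]
      with i hi
    by_contra! hlt
    refine hi.not_ge (ENNReal.ofReal_le_ofReal (H.primitive_le_primitive y ?_))
    rw [one_div_pow, div_lt_iff₀' (by positivity)] at hlt
    simpa [Real.dist_eq, abs_mul] using hlt.le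
  exact cauchySeq_tendsto_of_complete <| cauchySeq_of_summable_dist <|
    .of_norm_bounded_eventually_nat summable_geometric_two <| by
      simpa only [Real.norm_of_nonneg dist_nonneg] using hdist

lemma exists_subseq_ae_tendsto_of_modular_cauchy {g : ℕ → Y → ℝ} (hg : ∀ i, Measurable (g i))
    (hcauchy : Tendsto (fun k : ℕ × ℕ => modular φ μ ((1 / 2 : ℝ) • (g k.1 - g k.2)))
      (atTop ×ˢ atTop) (nhds 0)) :
    ∃ ns : ℕ → ℕ, StrictMono ns ∧
      ∀ᵐ y ∂μ, ∃ l, Tendsto (fun i => g (ns i) y) atTop (nhds l) := by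
  let ε : ℕ → ℝ := fun i => (((2 : ℝ) ^ (i + 1)) ^ r)⁻¹ * (1 / 2) ^ i
  have hlarge : ∀ i, ∀ᶠ k in atTop, ∀ m ≥ k, ∀ n ≥ k,
      modular φ μ ((1 / 2 : ℝ) • (g m - g n)) ≤ ENNReal.ofReal (ε i) := by
    intro i
    have hε := hcauchy.eventually_le_const (ENNReal.ofReal_pos.2 (by positivity : 0 < ε i))
    rw [prod_atTop_atTop_eq, eventually_atTop_prod_self'] at hε
    obtain ⟨k, hk⟩ := hε
    exact eventually_atTop.2 ⟨k, fun k' hk' m hm n hn => hk m (hk'.trans hm) n (hk'.trans hn)⟩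
  obtain ⟨ns, hns, hns_le⟩ := extraction_forall_of_eventually hlarge
  refine ⟨ns, hns, H.ae_exists_tendsto_of_tsum_modular (fun i => hg (ns i)) ?_⟩
  have hterm : ∀ i, modular φ μ ((2 : ℝ) ^ i • (g (ns i) - g (ns (i + 1))))
      ≤ ENNReal.ofReal ((1 / 2) ^ i) := by
    intro i
    rw [show (2 : ℝ) ^ i = 2 ^ (i + 1) * (1 / 2) by ring, mul_smul]
    calc _ ≤ ENNReal.ofReal (((2 : ℝ) ^ (i + 1)) ^ r) * ENNReal.ofReal (ε i) :=
          (H.modular_smul_le_of_one_le (one_le_pow₀ one_le_two) _).trans <| by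
            gcongr; exact hns_le i _ le_rfl _ (hns (Nat.lt_succ_self i)).le
      _ = ENNReal.ofReal ((1 / 2) ^ i) := by
          rw [← ENNReal.ofReal_mul (by positivity),
            mul_inv_cancel_left₀ (Real.rpow_pos_of_pos (by positivity) r).ne']
  refine ne_top_of_le_ne_top ?_ (ENNReal.tsum_le_tsum hterm)
  rw [← ENNReal.ofReal_tsum_of_nonneg (fun i => by positivity) summable_geometric_two]
  exact ENNReal.ofReal_ne_top

end IsMusielakOrlicz

end Modular

section VariableExponent

lemma max_rpow_le_rpow_add_rpow {A B b : ℝ} (hA : 0 ≤ A) (hB : 0 ≤ B) :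
    max A B ^ b ≤ A ^ b + B ^ b := by
  rcases max_choice A B with h | h <;> rw [h]
  exacts [le_add_of_nonneg_right (by positivity), le_add_of_nonneg_left (by positivity)]

lemma add_rpow_le_two_rpow_mul {A B b b' : ℝ} (hA : 0 ≤ A) (hB : 0 ≤ B) (hb : 0 ≤ b)
    (hbb' : b ≤ b') : (A + B) ^ b ≤ 2 ^ b' * (A ^ b + B ^ b) :=
  calc (A + B) ^ b ≤ (2 * max A B) ^ b := by
        gcongr; linarith [le_max_left A B, le_max_right A B]
    _ = 2 ^ b * max A B ^ b := Real.mul_rpow zero_le_two (le_max_of_le_left hA)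
    _ ≤ 2 ^ b' * (A ^ b + B ^ b) := by
        gcongr
        exacts [one_le_two, max_rpow_le_rpow_add_rpow hA hB]

lemma rpow_sub_one_mul_self {A b : ℝ} (hA : 0 ≤ A) (hb : 1 ≤ b) : A ^ (b - 1) * A = A ^ b := by
  rw [← Real.rpow_add_one' hA (by linarith), sub_add_cancel]

lemma rpow_sub_one_mul_le {A B δ b b' : ℝ} (hA : 0 ≤ A) (hB : 0 ≤ B) (hδ : 0 < δ) (hδ1 : δ ≤ 1)
    (hb : 1 ≤ b) (hbb' : b ≤ b') : A ^ (b - 1) * B ≤ δ * A ^ b + δ ^ (-b') * B ^ b := by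
  have : 0 ≤ b - 1 := by linarith
  rcases le_total B (δ * A) with h | h
  · calc A ^ (b - 1) * B ≤ A ^ (b - 1) * (δ * A) := by gcongr
      _ = δ * A ^ b := by rw [mul_left_comm, rpow_sub_one_mul_self hA hb]
      _ ≤ _ := le_add_of_nonneg_right (by positivity)
  · calc A ^ (b - 1) * B ≤ (B / δ) ^ (b - 1) * B := by
          gcongr; rwa [le_div_iff₀' hδ]
      _ = δ ^ (-(b - 1)) * B ^ b := by
          rw [Real.div_rpow hB hδ.le, Real.rpow_neg hδ.le, ← rpow_sub_one_mul_self hB hb]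
          ring
      _ ≤ δ ^ (-b') * B ^ b := by
          gcongr ?_ * _
          exact Real.rpow_le_rpow_of_exponent_ge hδ hδ1 (by linarith)
      _ ≤ _ := le_add_of_nonneg_left (by positivity)

lemma tendsto_of_forall_abs_sub_le {ι : Type*} {l : Filter ι} {a x : ι → ℝ} {a₀ A : ℝ}
    {B : ℝ → ℝ} (hx : Tendsto x l (nhds 0))
    (h : ∀ δ, 0 < δ → δ ≤ 1 → ∀ i, |a i - a₀| ≤ A * δ + B δ * x i) :
    Tendsto a l (nhds a₀) := by
  refine Metric.tendsto_nhds.2 fun ε hε => ?_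
  obtain ⟨δ, hAδ, hδ0, hδ1⟩ : ∃ δ, A * δ < ε ∧ 0 < δ ∧ δ ≤ 1 := by
    have hA : Tendsto (fun δ => A * δ) (nhdsWithin 0 (Ioi 0)) (nhds 0) := by
      simpa using (tendsto_id.const_mul A).mono_left (nhdsWithin_le_nhds (a := (0 : ℝ)))
    exact ((hA.eventually_lt_const hε).and (Ioc_mem_nhdsGT one_pos)).exists
  have hlim : Tendsto (fun i => A * δ + B δ * x i) l (nhds (A * δ)) := by
    simpa using (hx.const_mul (B δ)).const_add (A * δ)
  filter_upwards [hlim.eventually_lt_const hAδ] with i hi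
  exact (h δ hδ0 hδ1 i).trans_lt hi

variable {α : Type*} [MeasurableSpace α] {ν : Measure α} {q : α → ℝ} {qp : ℝ} {u v w : α → ℝ}

/-- A measurable exponent function with values in `[1, qp]`. -/
structure IsVariableExponent (ν : Measure α) (q : α → ℝ) (qp : ℝ) : Prop where
  aemeasurable : AEMeasurable q ν
  one_le : ∀ᵐ x ∂ν, 1 ≤ q x
  le : ∀ᵐ x ∂ν, q x ≤ qp

namespace IsVariableExponent

lemma of_continuousOn [TopologicalSpace α] [OpensMeasurableSpace α] {S : Set α}
    (hS : MeasurableSet S) (hq : ContinuousOn q S) (hq1 : ∀ x ∈ S, 1 ≤ q x)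
    (hqp : ∀ x ∈ S, q x ≤ qp) : IsVariableExponent (ν.restrict S) q qp where
  aemeasurable := hq.aemeasurable hS
  one_le := ae_restrict_of_forall_mem hS hq1
  le := ae_restrict_of_forall_mem hS hqp

variable (E : IsVariableExponent ν q qp)
include E

lemma one_le_bound [NeZero ν] : 1 ≤ qp :=
  let ⟨_, h1, h2⟩ := (E.one_le.and E.le).exists
  h1.trans h2

lemma aestronglyMeasurable_rpow (hu : Measurable u) :
    AEStronglyMeasurable (fun x => |u x| ^ q x) ν :=
  (hu.abs.aemeasurable.pow E.aemeasurable).aestronglyMeasurable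

lemma integrable_abs_add_abs_rpow (hu : Measurable u) (hv : Measurable v)
    (hIu : Integrable (fun x => |u x| ^ q x) ν) (hIv : Integrable (fun x => |v x| ^ q x) ν) :
    Integrable (fun x => (|u x| + |v x|) ^ q x) ν := by
  refine ((hIu.add hIv).const_mul (2 ^ qp)).mono'
    ((hu.abs.add hv.abs).aemeasurable.pow E.aemeasurable).aestronglyMeasurable ?_
  filter_upwards [E.one_le, E.le] with x hx hx'
  rw [Real.norm_of_nonneg (by positivity)]
  exact add_rpow_le_two_rpow_mul (abs_nonneg _) (abs_nonneg _) (by linarith) hx'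

/-- The variable-exponent Lebesgue space `L^{q(·)}(ν)` as a space of measurable functions. -/
def space : Submodule ℝ (α → ℝ) where
  carrier := {u | Measurable u ∧ Integrable (fun x => |u x| ^ q x) ν}
  zero_mem' := by
    refine ⟨measurable_const, (integrable_zero α ℝ ν).congr ?_⟩
    filter_upwards [E.one_le] with x hx
    simp [Real.zero_rpow (one_pos.trans_le hx).ne']
  add_mem' := by
    rintro u v ⟨hu, hIu⟩ ⟨hv, hIv⟩
    refine ⟨hu.add hv, (E.integrable_abs_add_abs_rpow hu hv hIu hIv).mono'
      (E.aestronglyMeasurable_rpow (hu.add hv)) ?_⟩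
    filter_upwards [E.one_le] with x hx
    rw [Real.norm_of_nonneg (by positivity)]
    gcongr
    exact abs_add_le _ _
  smul_mem' := by
    rintro c u ⟨hu, hIu⟩
    refine ⟨hu.const_smul c, (hIu.const_mul ((1 + |c|) ^ qp)).mono'
      (E.aestronglyMeasurable_rpow (hu.const_smul c)) ?_⟩
    filter_upwards [E.one_le, E.le] with x hx hx'
    rw [Real.norm_of_nonneg (by positivity), Pi.smul_apply, smul_eq_mul, abs_mul,
      Real.mul_rpow (abs_nonneg _) (abs_nonneg _)]
    gcongr
    exact (Real.rpow_le_rpow (abs_nonneg c) (by linarith) (by linarith)).trans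
      (Real.rpow_le_rpow_of_exponent_le (by linarith [abs_nonneg c]) hx')

lemma integral_midpoint_rpow_le (hu : u ∈ E.space) (hv : v ∈ E.space) :
    ∫ x, |((1 / 2 : ℝ) • (u + v)) x| ^ q x ∂ν ≤ ∫ x, |u x| ^ q x ∂ν + ∫ x, |v x| ^ q x ∂ν := by
  rw [← integral_add hu.2 hv.2]
  refine integral_mono_ae (E.space.smul_mem _ (E.space.add_mem hu hv)).2 (hu.2.add hv.2) ?_
  filter_upwards [E.one_le] with x hx
  refine (Real.rpow_le_rpow (abs_nonneg _) ?_ (by linarith)).trans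
    (max_rpow_le_rpow_add_rpow (abs_nonneg (u x)) (abs_nonneg (v x)))
  have := abs_add_le (u x) (v x)
  simp only [Pi.smul_apply, Pi.add_apply, smul_eq_mul, abs_mul, abs_of_pos (one_half_pos (α := ℝ))]
  linarith [le_max_left |u x| |v x|, le_max_right |u x| |v x|]

lemma tendsto_integral_midpoint_sub_rpow {g : ℕ → α → ℝ} (hg : ∀ n, g n ∈ E.space)
    (hw : w ∈ E.space) (hlim : Tendsto (fun n => ∫ x, |g n x - w x| ^ q x ∂ν) atTop (nhds 0)) :
    Tendsto (fun k : ℕ × ℕ => ∫ x, |((1 / 2 : ℝ) • (g k.1 + g k.2)) x - w x| ^ q x ∂ν)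
      (atTop ×ˢ atTop) (nhds 0) := by
  have hsum : Tendsto (fun k : ℕ × ℕ => ∫ x, |g k.1 x - w x| ^ q x ∂ν
      + ∫ x, |g k.2 x - w x| ^ q x ∂ν) (atTop ×ˢ atTop) (nhds 0) := by
    simpa using (hlim.comp tendsto_fst).add (hlim.comp tendsto_snd)
  refine squeeze_zero (fun k => integral_nonneg fun x => by positivity) (fun k => ?_) hsum
  refine le_of_eq_of_le (integral_congr_ae (.of_forall fun x => ?_)) <|
    E.integral_midpoint_rpow_le (E.space.sub_mem (hg k.1) hw) (E.space.sub_mem (hg k.2) hw)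
  simp only [Pi.smul_apply, Pi.add_apply, smul_eq_mul]
  ring_nf

lemma ae_eq_of_tendsto_integral_rpow {g : ℕ → α → ℝ} (hg : ∀ n, g n ∈ E.space)
    (hu : Measurable u) (hw : w ∈ E.space)
    (hgu : ∀ᵐ x ∂ν, Tendsto (fun n => g n x) atTop (nhds (u x)))
    (hgw : Tendsto (fun n => ∫ x, |g n x - w x| ^ q x ∂ν) atTop (nhds 0)) : u =ᵐ[ν] w := by
  have hmeas : ∀ {v}, Measurable v → AEMeasurable (fun x => ENNReal.ofReal (|v x| ^ q x)) ν :=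
    fun hv => (E.aestronglyMeasurable_rpow hv).aemeasurable.ennreal_ofReal
  have hlim : Tendsto (fun n => ∫⁻ x, ENNReal.ofReal (|g n x - w x| ^ q x) ∂ν) atTop (nhds 0) := by
    have h := ENNReal.tendsto_ofReal hgw
    rw [ENNReal.ofReal_zero] at h
    exact h.congr fun n => ofReal_integral_eq_lintegral_ofReal (E.space.sub_mem (hg n) hw).2
      (.of_forall fun x => by positivity)
  have hzero : ∫⁻ x, ENNReal.ofReal (|u x - w x| ^ q x) ∂ν = 0 := by
    refine le_antisymm (le_trans (lintegral_mono_ae ?_) <|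
      (lintegral_liminf_le' fun n => hmeas ((hg n).1.sub hw.1)).trans_eq hlim.liminf_eq) zero_le
    filter_upwards [hgu, E.one_le] with x hx hqx
    exact (ENNReal.tendsto_ofReal
      ((hx.sub_const (w x)).abs.rpow_const (Or.inr (by linarith)))).liminf_eq.ge
  filter_upwards [(lintegral_eq_zero_iff' (hmeas (hu.sub hw.1))).1 hzero, E.one_le] with x hx hqx
  have hpow : |u x - w x| ^ q x = 0 := (ENNReal.ofReal_eq_zero.1 hx).antisymm (by positivity)
  exact sub_eq_zero.1 (abs_eq_zero.1 ((Real.rpow_eq_zero (abs_nonneg _) (by linarith)).1 hpow))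

lemma lintegral_rpow_le_of_lintegral_div_le {l L : ℝ} (hl : 0 < l) (hlL : l ≤ L) (hL : 1 ≤ L)
    (h : ∫⁻ x, ENNReal.ofReal (|u x / l| ^ q x) ∂ν ≤ 1) :
    ∫⁻ x, ENNReal.ofReal (|u x| ^ q x) ∂ν ≤ ENNReal.ofReal (L ^ qp) := by
  calc ∫⁻ x, ENNReal.ofReal (|u x| ^ q x) ∂ν
      ≤ ∫⁻ x, ENNReal.ofReal (L ^ qp) * ENNReal.ofReal (|u x / l| ^ q x) ∂ν := by
        refine lintegral_mono_ae ?_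
        filter_upwards [E.one_le, E.le] with x hx hx'
        rw [← ENNReal.ofReal_mul (by positivity)]
        refine ENNReal.ofReal_le_ofReal ?_
        calc |u x| ^ q x = l ^ q x * |u x / l| ^ q x := by
              rw [← Real.mul_rpow hl.le (abs_nonneg _), abs_div, abs_of_pos hl,
                mul_div_cancel₀ _ hl.ne']
          _ ≤ L ^ qp * |u x / l| ^ q x := by
              gcongr ?_ * _
              exact (Real.rpow_le_rpow hl.le hlL (by linarith)).trans
                (Real.rpow_le_rpow_of_exponent_le hL hx')
    _ = ENNReal.ofReal (L ^ qp) * ∫⁻ x, ENNReal.ofReal (|u x / l| ^ q x) ∂ν :=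
        lintegral_const_mul' _ _ ENNReal.ofReal_ne_top
    _ ≤ ENNReal.ofReal (L ^ qp) := mul_le_of_le_one_right' h

lemma mem_space_of_lintegral_le {M : ℝ} (hM : 0 ≤ M) (hu : Measurable u)
    (h : ∫⁻ x, ENNReal.ofReal (|u x| ^ q x) ∂ν ≤ ENNReal.ofReal M) :
    u ∈ E.space ∧ ∫ x, |u x| ^ q x ∂ν ≤ M := by
  have hnonneg : 0 ≤ᵐ[ν] fun x => |u x| ^ q x := .of_forall fun x => by positivity
  refine ⟨⟨hu, E.aestronglyMeasurable_rpow hu,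
    (hasFiniteIntegral_iff_ofReal hnonneg).2 (h.trans_lt ENNReal.ofReal_lt_top)⟩, ?_⟩
  rw [integral_eq_lintegral_of_nonneg_ae hnonneg (E.aestronglyMeasurable_rpow hu)]
  exact ENNReal.toReal_le_of_le_ofReal hM h

end IsVariableExponent

/-- A Carathéodory function with the growth `|f(x,t)| ≤ c₁ |t|^{q(x)-1}`. -/
structure HasPowerGrowth (ν : Measure α) (q : α → ℝ) (f : α → ℝ → ℝ) (c₁ : ℝ) : Prop where
  measurable : ∀ t, Measurable fun x => f x t
  continuous : ∀ x, Continuous (f x)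
  nonneg : 0 ≤ c₁
  bound : ∀ᵐ x ∂ν, ∀ t, |f x t| ≤ c₁ * |t| ^ (q x - 1)

namespace HasPowerGrowth

variable {f : α → ℝ → ℝ} {c₁ : ℝ} (hf : HasPowerGrowth ν q f c₁)
include hf

lemma measurable_comp (hu : Measurable u) : Measurable fun x => f x (u x) :=
  (measurable_uncurry_of_measurable_of_continuous hf.measurable hf.continuous).comp
    (measurable_id.prodMk hu)

lemma measurable_primitive_comp (hu : Measurable u) : Measurable fun x => primitive f x (u x) :=
  (measurable_uncurry_primitive (measurable_uncurry_of_measurable_of_continuous hf.measurable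
    hf.continuous) hf.continuous).comp (measurable_id.prodMk hu)

variable (E : IsVariableExponent ν q qp)
include E

lemma ae_abs_primitive_sub_le : ∀ᵐ x ∂ν, ∀ t₁ t₂ : ℝ,
    |primitive f x t₁ - primitive f x t₂| ≤ c₁ * (|t₁| + |t₂|) ^ (q x - 1) * |t₁ - t₂| := by
  filter_upwards [hf.bound, E.one_le] with x hfx hqx
  exact abs_primitive_sub_primitive_le (hf.continuous x) hf.nonneg (sub_nonneg.2 hqx) hfx

lemma ae_abs_primitive_le : ∀ᵐ x ∂ν, ∀ t : ℝ, |primitive f x t| ≤ c₁ * |t| ^ q x := by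
  filter_upwards [hf.ae_abs_primitive_sub_le E, E.one_le] with x hx hqx t
  simpa [primitive_zero, mul_assoc, rpow_sub_one_mul_self (abs_nonneg t) hqx] using hx t 0

lemma integrable_primitive (hu : u ∈ E.space) : Integrable (fun x => primitive f x (u x)) ν := by
  refine (hu.2.const_mul c₁).mono' (hf.measurable_primitive_comp hu.1).aestronglyMeasurable ?_
  filter_upwards [hf.ae_abs_primitive_le E] with x hx
  exact hx (u x)

lemma integral_primitive_le (hu : u ∈ E.space) :
    ∫ x, primitive f x (u x) ∂ν ≤ c₁ * ∫ x, |u x| ^ q x ∂ν := by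
  rw [← integral_const_mul]
  refine integral_mono_ae (hf.integrable_primitive E hu) (hu.2.const_mul c₁) ?_
  filter_upwards [hf.ae_abs_primitive_le E] with x hx
  exact (le_abs_self _).trans (hx (u x))

lemma abs_integral_primitive_sub_le (hu : u ∈ E.space) (hw : w ∈ E.space) {δ : ℝ} (hδ : 0 < δ)
    (hδ1 : δ ≤ 1) :
    |∫ x, primitive f x (u x) ∂ν - ∫ x, primitive f x (w x) ∂ν| ≤
      c₁ * 2 ^ qp * (∫ x, |((2 : ℝ) • w) x| ^ q x ∂ν) * δ
        + c₁ * (2 ^ qp * δ + δ ^ (-qp)) * ∫ x, |u x - w x| ^ q x ∂ν := by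
  have hsub : Integrable (fun x => |u x - w x| ^ q x) ν := (E.space.sub_mem hu hw).2
  have htwo : Integrable (fun x => |((2 : ℝ) • w) x| ^ q x) ν := (E.space.smul_mem 2 hw).2
  have hFu := hf.integrable_primitive E hu
  have hFw := hf.integrable_primitive E hw
  have hc₁ := hf.nonneg
  rw [← integral_sub hFu hFw, ← integral_const_mul, ← integral_mul_const, ← integral_const_mul,
    ← integral_add ((htwo.const_mul _).mul_const _) (hsub.const_mul _)]
  refine abs_integral_le_integral_abs.trans (integral_mono_ae (hFu.sub hFw).abs
    (((htwo.const_mul _).mul_const _).add (hsub.const_mul _)) ?_)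
  filter_upwards [hf.ae_abs_primitive_sub_le E, E.one_le, E.le] with x hx hq1 hqp
  set D := |u x - w x|
  set W := |((2 : ℝ) • w) x|
  have htri : |u x| + |w x| ≤ W + D := by
    have hW : W = 2 * |w x| := by simp [W, abs_mul]
    have hu : |u x| ≤ D + |w x| := by simpa using abs_add_le (u x - w x) (w x)
    linarith
  calc |primitive f x (u x) - primitive f x (w x)|
      ≤ c₁ * (W + D) ^ (q x - 1) * D := (hx _ _).trans (by gcongr)
    _ = c₁ * ((W + D) ^ (q x - 1) * D) := mul_assoc _ _ _
    _ ≤ c₁ * (δ * (W + D) ^ q x + δ ^ (-qp) * D ^ q x) := by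
        gcongr
        exact rpow_sub_one_mul_le (by positivity) (abs_nonneg _) hδ hδ1 hq1 hqp
    _ ≤ c₁ * (δ * (2 ^ qp * (W ^ q x + D ^ q x)) + δ ^ (-qp) * D ^ q x) := by
        gcongr
        exact add_rpow_le_two_rpow_mul (abs_nonneg _) (abs_nonneg _) (by linarith) hqp
    _ = _ := by ring

lemma tendsto_integral_primitive {ι : Type*} {l : Filter ι} {g : ι → α → ℝ}
    (hg : ∀ i, g i ∈ E.space) (hw : w ∈ E.space)
    (hlim : Tendsto (fun i => ∫ x, |g i x - w x| ^ q x ∂ν) l (nhds 0)) :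
    Tendsto (fun i => ∫ x, primitive f x (g i x) ∂ν) l (nhds (∫ x, primitive f x (w x) ∂ν)) :=
  tendsto_of_forall_abs_sub_le hlim fun _ hδ hδ1 i =>
    hf.abs_integral_primitive_sub_le E (hg i) hw hδ hδ1

lemma hasDerivAt_integral_primitive (hu : u ∈ E.space) (hv : v ∈ E.space) :
    HasDerivAt (fun e : ℝ => ∫ x, primitive f x ((u + e • v) x) ∂ν)
      (∫ x, f x (u x) * v x ∂ν) 0 := by
  have hmeas : ∀ e : ℝ, Measurable (u + e • v) := fun e => hu.1.add (hv.1.const_smul e)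
  have hderiv := (hasDerivAt_integral_of_dominated_loc_of_deriv_le (μ := ν) (x₀ := (0 : ℝ))
    (F := fun e x => primitive f x ((u + e • v) x))
    (F' := fun e x => f x ((u + e • v) x) * v x)
    (bound := fun x => c₁ * (|u x| + |v x|) ^ q x)
    (Metric.closedBall_mem_nhds (0 : ℝ) one_pos)
    (.of_forall fun e => (hf.measurable_primitive_comp (hmeas e)).aestronglyMeasurable)
    (by simpa using hf.integrable_primitive E hu)
    ((hf.measurable_comp (hmeas 0)).mul hv.1).aestronglyMeasurable ?_
    ((E.integrable_abs_add_abs_rpow hu.1 hv.1 hu.2 hv.2).const_mul c₁)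
    (.of_forall fun x e _ => (hasDerivAt_primitive (hf.continuous x) _).comp e
      (by simpa using ((hasDerivAt_id e).mul_const (v x)).const_add (u x)))).2
  · simpa using hderiv
  filter_upwards [hf.bound, E.one_le] with x hfx hqx e he
  have habs : |(u + e • v) x| ≤ |u x| + |v x| := by
    refine (abs_add_le _ _).trans (add_le_add_right ?_ _)
    simpa [abs_mul] using mul_le_of_le_one_left (abs_nonneg (v x)) (by simpa using he)
  have hc₁ := hf.nonneg
  calc ‖f x ((u + e • v) x) * v x‖
      ≤ c₁ * (|u x| + |v x|) ^ (q x - 1) * (|u x| + |v x|) := by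
        rw [norm_mul, Real.norm_eq_abs, Real.norm_eq_abs]
        gcongr
        · exact (hfx _).trans (by gcongr)
        · exact le_add_of_nonneg_left (abs_nonneg _)
    _ = c₁ * (|u x| + |v x|) ^ q x := by
        rw [mul_assoc, rpow_sub_one_mul_self (by positivity) hqx]

end HasPowerGrowth

end VariableExponent

section Variational

variable {α Y : Type*} [MeasurableSpace α] [MeasurableSpace Y] {φ : Y → ℝ → ℝ} {p r : ℝ}
  {μ : Measure Y} {ν : Measure α} {q : α → ℝ} {qp : ℝ} {f : α → ℝ → ℝ} {c₁ lam : ℝ}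
  {T : (α → ℝ) →ₗ[ℝ] (Y → ℝ)} {u v w : α → ℝ}

/-- The energy `∫ Φ_y(T u) dμ - λ ∫ F(x, u) dν` of a function `u`, where the linear operator `T`
plays the role of a gradient. -/
def energy (φ : Y → ℝ → ℝ) (μ : Measure Y) (T : (α → ℝ) →ₗ[ℝ] (Y → ℝ)) (f : α → ℝ → ℝ)
    (ν : Measure α) (lam : ℝ) (u : α → ℝ) : ℝ :=
  (modular φ μ (T u)).toReal - lam * ∫ x, primitive f x (u x) ∂ν

/-- The measurable functions whose image under the gradient-like operator `T` has finite
modular. -/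
def IsMusielakOrlicz.energySpace (H : IsMusielakOrlicz φ p r) (μ : Measure Y)
    (T : (α → ℝ) →ₗ[ℝ] (Y → ℝ)) : Submodule ℝ (α → ℝ) where
  carrier := {u | Measurable u ∧ T u ∈ H.space μ}
  zero_mem' := ⟨measurable_const, by rw [map_zero]; exact zero_mem _⟩
  add_mem' := fun hu hv => ⟨hu.1.add hv.1, by rw [map_add]; exact add_mem hu.2 hv.2⟩
  smul_mem' := fun c _ hu =>
    ⟨hu.1.const_smul c, by rw [map_smul]; exact Submodule.smul_mem _ c hu.2⟩

/-- Closedness of the gradient-like operator `T` for almost everywhere convergence: if the images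
`T (g n)` converge a.e., then their limit is the image of a measurable function, which is moreover
the `ν`-a.e. limit of `g n`. -/
def IsAEClosed (T : (α → ℝ) →ₗ[ℝ] (Y → ℝ)) (μ : Measure Y) (ν : Measure α) : Prop :=
  ∀ g : ℕ → α → ℝ, (∀ n, Measurable (g n)) →
    (∀ᵐ y ∂μ, ∃ l, Tendsto (fun n => T (g n) y) atTop (nhds l)) →
    ∃ u, Measurable u ∧ Measurable (T u) ∧
      (∀ᵐ y ∂μ, Tendsto (fun n => T (g n) y) atTop (nhds (T u y))) ∧
      ∀ᵐ x ∂ν, Tendsto (fun n => g n x) atTop (nhds (u x))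

lemma exists_mul_rpow_le_half_add {θ : ℝ} (hθ : θ < 1) {B : ℝ} (hB : 0 ≤ B) :
    ∃ C, ∀ K, 1 ≤ K → B * K ^ θ ≤ K / 2 + C := by
  have hlim : Tendsto (fun K : ℝ => B * K ^ (θ - 1)) atTop (nhds 0) := by
    simpa using (tendsto_rpow_neg_atTop (sub_pos.2 hθ)).const_mul B
  obtain ⟨K₀, hK₀⟩ := eventually_atTop.1 (hlim.eventually_le_const (half_pos one_pos))
  refine ⟨B * (max K₀ 1) ^ max θ 0, fun K hK => ?_⟩
  have hK0 : 0 < K := one_pos.trans_le hK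
  rcases le_total K₀ K with h | h
  · calc B * K ^ θ = B * K ^ (θ - 1) * K := by
          rw [mul_assoc, ← Real.rpow_add_one hK0.ne', sub_add_cancel]
      _ ≤ 1 / 2 * K := by gcongr; exact hK₀ K h
      _ = K / 2 := by ring
      _ ≤ _ := le_add_of_nonneg_right (by positivity)
  · calc B * K ^ θ ≤ B * K ^ max θ 0 := by
          gcongr; exact le_max_left _ _
      _ ≤ B * (max K₀ 1) ^ max θ 0 := by
          gcongr; exact h.trans (le_max_left _ _)
      _ ≤ _ := le_add_of_nonneg_left (by positivity)

lemma energy_coercive (hf : HasPowerGrowth ν q f c₁) (E : IsVariableExponent ν q qp)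
    (hlam : 0 ≤ lam) {S : Set (α → ℝ)} {A θ : ℝ} (hA : 0 ≤ A) (hθ : θ < 1)
    (hS : ∀ u ∈ S, ∀ K, 1 ≤ K → (modular φ μ (T u)).toReal ≤ K →
      u ∈ E.space ∧ ∫ x, |u x| ^ q x ∂ν ≤ A * K ^ θ) :
    ∃ C, ∀ u ∈ S, (modular φ μ (T u)).toReal / 2 - C ≤ energy φ μ T f ν lam u := by
  have hc₁ := hf.nonneg
  obtain ⟨C, hC⟩ := exists_mul_rpow_le_half_add hθ (by positivity : 0 ≤ lam * (c₁ * A))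
  refine ⟨1 / 2 + C, fun u hu => ?_⟩
  set K := 1 + (modular φ μ (T u)).toReal
  have hK1 : 1 ≤ K := le_add_of_nonneg_right ENNReal.toReal_nonneg
  obtain ⟨huE, hle⟩ := hS u hu K hK1 (by linarith)
  have hG : lam * ∫ x, primitive f x (u x) ∂ν ≤ K / 2 + C :=
    calc lam * ∫ x, primitive f x (u x) ∂ν ≤ lam * (c₁ * (A * K ^ θ)) := by
          gcongr
          exact (hf.integral_primitive_le E huE).trans (by gcongr)
      _ = lam * (c₁ * A) * K ^ θ := by ring
      _ ≤ K / 2 + C := hC K hK1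
  rw [energy]
  linarith

namespace IsMusielakOrlicz

variable (H : IsMusielakOrlicz φ p r)
include H

-- By Clarkson's inequality the midpoints are competitors, so the energy gap controls differences.
lemma tendsto_modular_half_sub_of_minimizing
    (hconv : ∀ y, ConvexOn ℝ (Ici 0) fun t => primitive φ y √t)
    {g : ℕ → α → ℝ} {m G : ℝ} (hg : ∀ n, g n ∈ H.energySpace μ T)
    (hm : ∀ v ∈ H.energySpace μ T, m ≤ energy φ μ T f ν lam v)
    (hmin : Tendsto (fun n => energy φ μ T f ν lam (g n)) atTop (nhds m))
    (hG : Tendsto (fun n => ∫ x, primitive f x (g n x) ∂ν) atTop (nhds G))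
    (hGmid : Tendsto (fun k : ℕ × ℕ => ∫ x, primitive f x (((1 / 2 : ℝ) • (g k.1 + g k.2)) x) ∂ν)
      (atTop ×ˢ atTop) (nhds G)) :
    Tendsto (fun k : ℕ × ℕ => modular φ μ ((1 / 2 : ℝ) • (T (g k.1) - T (g k.2))))
      (atTop ×ˢ atTop) (nhds 0) := by
  have hI : Tendsto (fun n => (modular φ μ (T (g n))).toReal) atTop (nhds (m + lam * G)) := by
    simpa [energy] using hmin.add (hG.const_mul lam)
  have hgap : Tendsto (fun k : ℕ × ℕ => ((modular φ μ (T (g k.1))).toReal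
      + (modular φ μ (T (g k.2))).toReal) / 2
      - (m + lam * ∫ x, primitive f x (((1 / 2 : ℝ) • (g k.1 + g k.2)) x) ∂ν))
      (atTop ×ˢ atTop) (nhds 0) := by
    have := (((hI.comp tendsto_fst).add (hI.comp tendsto_snd)).div_const 2).sub
      ((hGmid.const_mul lam).const_add m)
    simpa using this
  have hhalf : ∀ k : ℕ × ℕ, (1 / 2 : ℝ) • (T (g k.1) - T (g k.2)) ∈ H.space μ := fun k =>
    Submodule.smul_mem _ _ (sub_mem (hg k.1).2 (hg k.2).2)
  refine (ENNReal.tendsto_toReal_zero_iff fun k => (hhalf k).2.ne).1 <|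
    squeeze_zero (fun _ => ENNReal.toReal_nonneg) (fun k => ?_) hgap
  have hmid := hm _ (Submodule.smul_mem _ (1 / 2 : ℝ) (add_mem (hg k.1) (hg k.2)))
  rw [energy, map_smul, map_add] at hmid
  linarith [H.toReal_modular_clarkson hconv (hg k.1).2 (hg k.2).2]

variable (hf : HasPowerGrowth ν q f c₁) (E : IsVariableExponent ν q qp)
include hf E

lemma exists_energy_le_of_minimizing
    (hconv : ∀ y, ConvexOn ℝ (Ici 0) fun t => primitive φ y √t)
    (hVE : ∀ u ∈ H.energySpace μ T, u ∈ E.space)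
    (hclosed : IsAEClosed T μ ν)
    {g : ℕ → α → ℝ} {m : ℝ} (hg : ∀ n, g n ∈ H.energySpace μ T)
    (hm : ∀ v ∈ H.energySpace μ T, m ≤ energy φ μ T f ν lam v)
    (hmin : Tendsto (fun n => energy φ μ T f ν lam (g n)) atTop (nhds m))
    (hw : w ∈ E.space) (hgw : Tendsto (fun n => ∫ x, |g n x - w x| ^ q x ∂ν) atTop (nhds 0)) :
    ∃ u ∈ H.energySpace μ T, energy φ μ T f ν lam u ≤ m := by
  have hgE := fun n => hVE _ (hg n)
  have hG := hf.tendsto_integral_primitive E hgE hw hgw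
  have hGmid := hf.tendsto_integral_primitive E
    (fun k : ℕ × ℕ => E.space.smul_mem (1 / 2 : ℝ) (add_mem (hgE k.1) (hgE k.2))) hw
    (E.tendsto_integral_midpoint_sub_rpow hgE hw hgw)
  obtain ⟨ns, hns, hconv_ae⟩ := H.exists_subseq_ae_tendsto_of_modular_cauchy
    (fun n => (hg n).2.1) (H.tendsto_modular_half_sub_of_minimizing hconv hg hm hmin hG hGmid)
  obtain ⟨u, hu, hTu, hTlim, hlim⟩ := hclosed (fun i => g (ns i)) (fun i => (hg _).1) hconv_ae
  have huw : u =ᵐ[ν] w := E.ae_eq_of_tendsto_integral_rpow (fun i => hgE (ns i)) hu hw hlim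
    (hgw.comp hns.tendsto_atTop)
  have hI : Tendsto (fun i => modular φ μ (T (g (ns i)))) atTop
      (nhds (ENNReal.ofReal (m + lam * ∫ x, primitive f x (w x) ∂ν))) := by
    have := ENNReal.tendsto_ofReal ((hmin.add (hG.const_mul lam)).comp hns.tendsto_atTop)
    simpa [energy, Function.comp_def, ENNReal.ofReal_toReal (hg _).2.2.ne] using this
  have hle := (H.modular_le_liminf (fun i => (hg (ns i)).2.1) hTlim).trans_eq hI.liminf_eq
  refine ⟨u, ⟨hu, hTu, hle.trans_lt ENNReal.ofReal_lt_top⟩, ?_⟩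
  have hGu : ∫ x, primitive f x (u x) ∂ν = ∫ x, primitive f x (w x) ∂ν :=
    integral_congr_ae (huw.mono fun x hx => congrArg (primitive f x) hx)
  have hnonneg : 0 ≤ m + lam * ∫ x, primitive f x (w x) ∂ν := by
    refine ge_of_tendsto' (hmin.add (hG.const_mul lam)) fun n => ?_
    simp [energy]
  rw [energy, hGu, sub_le_iff_le_add]
  exact ENNReal.toReal_le_of_le_ofReal hnonneg hle

lemma exists_energy_minimizer (hconv : ∀ y, ConvexOn ℝ (Ici 0) fun t => primitive φ y √t)
    (hlam : 0 ≤ lam) {A θ : ℝ} (hA : 0 ≤ A) (hθ : θ < 1)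
    (hemb : ∀ u ∈ H.energySpace μ T, ∀ K, 1 ≤ K → (modular φ μ (T u)).toReal ≤ K →
      u ∈ E.space ∧ ∫ x, |u x| ^ q x ∂ν ≤ A * K ^ θ)
    (hcpt : ∀ (g : ℕ → α → ℝ) (K : ℝ), (∀ n, g n ∈ H.energySpace μ T) →
      (∀ n, (modular φ μ (T (g n))).toReal ≤ K) → ∃ ns : ℕ → ℕ, StrictMono ns ∧ ∃ w ∈ E.space,
        Tendsto (fun k => ∫ x, |g (ns k) x - w x| ^ q x ∂ν) atTop (nhds 0))
    (hclosed : IsAEClosed T μ ν) :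
    ∃ u ∈ H.energySpace μ T, ∀ v ∈ H.energySpace μ T,
      energy φ μ T f ν lam u ≤ energy φ μ T f ν lam v := by
  set V := H.energySpace μ T
  set J := energy φ μ T f ν lam
  obtain ⟨C, hC⟩ := energy_coercive hf E hlam (S := V) hA hθ hemb
  have hbdd : BddBelow (J '' V) := by
    refine ⟨-C, forall_mem_image.2 fun v hv => le_trans ?_ (hC v hv)⟩
    linarith [(modular φ μ (T v)).toReal_nonneg]
  obtain ⟨j, hj_anti, hj, hjmem⟩ :=
    exists_seq_tendsto_sInf ((nonempty_of_mem V.zero_mem).image J) hbdd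
  choose g hg hgj using hjmem
  have hJg : Tendsto (fun n => J (g n)) atTop (nhds (sInf (J '' V))) := by simpa only [hgj]
  have hK : ∀ n, (modular φ μ (T (g n))).toReal ≤ 2 * (j 0 + C) := fun n => by
    linarith [hC (g n) (hg n), hgj n, hj_anti n.zero_le]
  obtain ⟨ns, hns, w, hw, hgw⟩ := hcpt g _ hg hK
  have hinf : ∀ v ∈ V, sInf (J '' V) ≤ J v := fun v hv => csInf_le hbdd (mem_image_of_mem J hv)
  obtain ⟨u, hu, hle⟩ := H.exists_energy_le_of_minimizing hf E hconv
    (fun u hu => (hemb u hu _ (le_max_left _ _) (le_max_right _ _)).1) hclosed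
    (fun n => hg (ns n)) hinf (hJg.comp hns.tendsto_atTop) hw hgw
  exact ⟨u, hu, fun v hv => hle.trans (hinf v hv)⟩

lemma energy_euler_lagrange (hVE : ∀ u ∈ H.energySpace μ T, u ∈ E.space)
    (hu : u ∈ H.energySpace μ T)
    (hmin : ∀ v ∈ H.energySpace μ T, energy φ μ T f ν lam u ≤ energy φ μ T f ν lam v)
    (hv : v ∈ H.energySpace μ T) :
    ∫ y, φ y (T u y) * T v y ∂μ = lam * ∫ x, f x (u x) * v x ∂ν := by
  have hderiv : HasDerivAt (fun e : ℝ => energy φ μ T f ν lam (u + e • v))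
      (∫ y, φ y (T u y) * T v y ∂μ - lam * ∫ x, f x (u x) * v x ∂ν) 0 := by
    simp only [energy, map_add, map_smul]
    exact (H.hasDerivAt_toReal_modular hu.2 hv.2).sub
      ((hf.hasDerivAt_integral_primitive E (hVE u hu) (hVE v hv)).const_mul lam)
  refine sub_eq_zero.1 (IsLocalMin.hasDerivAt_eq_zero (.of_forall fun e => ?_) hderiv)
  simpa using hmin _ (add_mem hu (Submodule.smul_mem _ e hv))

lemma exists_energy_neg (hlam : 0 < lam) (hqp : qp < p) {c₂ : ℝ} (hc₂ : 0 < c₂)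
    (hlow : ∀ᵐ x ∂ν, ∀ t, c₂ * |t| ^ q x ≤ primitive f x t)
    (hv : v ∈ H.energySpace μ T) (hvE : v ∈ E.space) (hpos : 0 < ∫ x, |v x| ^ q x ∂ν) :
    ∃ u ∈ H.energySpace μ T, energy φ μ T f ν lam u < 0 := by
  set I := (modular φ μ (T v)).toReal
  set B := ∫ x, |v x| ^ q x ∂ν
  obtain ⟨t, hsmall, ht0, ht1⟩ : ∃ t : ℝ, t ^ (p - qp) * I < lam * c₂ * B ∧ 0 < t ∧ t ≤ 1 := by
    have hlim : Tendsto (fun t : ℝ => t ^ (p - qp) * I) (nhdsWithin 0 (Ioi 0)) (nhds 0) := by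
      have := (Real.continuousAt_rpow_const 0 (p - qp) (Or.inr (sub_pos.2 hqp).le)).tendsto
      rw [Real.zero_rpow (sub_pos.2 hqp).ne'] at this
      simpa using (this.mul_const I).mono_left nhdsWithin_le_nhds
    exact ((hlim.eventually_lt_const (by positivity)).and (Ioc_mem_nhdsGT one_pos)).exists
  have hI : (modular φ μ (T (t • v))).toReal ≤ t ^ p * I := by
    rw [map_smul, ← ENNReal.toReal_ofReal (by positivity : 0 ≤ t ^ p), ← ENNReal.toReal_mul]
    exact ENNReal.toReal_mono (ENNReal.mul_lt_top ENNReal.ofReal_lt_top hv.2.2).ne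
      (H.modular_smul_le_of_le_one ht0 ht1 _)
  have hG : c₂ * t ^ qp * B ≤ ∫ x, primitive f x ((t • v) x) ∂ν := by
    rw [← integral_const_mul]
    refine integral_mono_ae (hvE.2.const_mul _)
      (hf.integrable_primitive E (E.space.smul_mem t hvE)) ?_
    filter_upwards [hlow, E.le] with x hx hqx
    refine le_trans ?_ (hx _)
    rw [Pi.smul_apply, smul_eq_mul, abs_mul, abs_of_pos ht0,
      Real.mul_rpow ht0.le (abs_nonneg _), ← mul_assoc]
    gcongr ?_ * _
    exact mul_le_mul_of_nonneg_left (Real.rpow_le_rpow_of_exponent_ge ht0 ht1 hqx) hc₂.le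
  refine ⟨t • v, Submodule.smul_mem _ t hv, ?_⟩
  calc energy φ μ T f ν lam (t • v) ≤ t ^ p * I - lam * (c₂ * t ^ qp * B) := by
        rw [energy]; gcongr
    _ = t ^ qp * (t ^ (p - qp) * I - lam * c₂ * B) := by
        rw [show t ^ p = t ^ qp * t ^ (p - qp) by rw [← Real.rpow_add ht0]; ring_nf]
        ring
    _ < 0 := mul_neg_of_pos_of_neg (by positivity) (by linarith)

end IsMusielakOrlicz

end Variational

section FractionalGradient

variable {Ω : Set (Eucl N)} {β u v : Eucl N → ℝ} {s : ℝ}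

/-- The fractional gradient of `u` on pairs of points: `D^s u` off the diagonal and, so that the
terms of order zero can be treated together with the nonlocal one, `u` itself on the diagonal. -/
def fracGrad (s : ℝ) : (Eucl N → ℝ) →ₗ[ℝ] (Eucl N × Eucl N → ℝ) where
  toFun u p := if p.1 = p.2 then u p.1 else Du s u p
  map_add' u v := by
    ext p
    simp only [Du, Pi.add_apply]
    split_ifs <;> ring
  map_smul' c u := by
    ext p
    simp only [Du, Pi.smul_apply, smul_eq_mul, RingHom.id_apply]
    split_ifs <;> ring

@[simp]
lemma fracGrad_diag (s : ℝ) (u : Eucl N → ℝ) (x : Eucl N) : fracGrad s u (x, x) = u x :=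
  if_pos rfl

lemma fracGrad_of_ne (s : ℝ) (u : Eucl N → ℝ) {p : Eucl N × Eucl N} (hp : p.1 ≠ p.2) :
    fracGrad s u p = Du s u p :=
  if_neg hp

lemma measurable_fracGrad (hu : Measurable u) : Measurable (fracGrad s u) :=
  .ite (measurableSet_eq_fun measurable_fst measurable_snd) (by fun_prop) (by unfold Du; fun_prop)

/-- The weight of the nonlocal term. It vanishes on the diagonal if `N ≠ 0`, because `1 / 0 = 0`. -/
def pairWeight (p : Eucl N × Eucl N) : ℝ≥0∞ := ENNReal.ofReal ((1/2) / dist p.1 p.2 ^ (N : ℝ))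

lemma measurable_pairWeight : Measurable (pairWeight (N := N)) := by
  unfold pairWeight; fun_prop

lemma pairWeight_eq_zero (hN : N ≠ 0) {p : Eucl N × Eucl N} (hp : p.1 = p.2) :
    pairWeight p = 0 := by
  simp [pairWeight, hp, hN]

lemma pairWeight_ne_zero {p : Eucl N × Eucl N} (hp : p.1 ≠ p.2) : pairWeight p ≠ 0 := by
  have := dist_pos.2 hp
  rw [pairWeight, ne_eq, ENNReal.ofReal_eq_zero, not_le]
  positivity

/-- The measure on pairs of points which encodes the three terms of the energy: the nonlocal one
off the diagonal, and on the diagonal Lebesgue measure on `Ω` and the weight `β` outside. -/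
def energyMeasure (Ω : Set (Eucl N)) (β : Eucl N → ℝ) : Measure (Eucl N × Eucl N) :=
  (volume.restrict (Qset Ω)).withDensity pairWeight
    + (volume.restrict Ω).map Function.diag
    + ((volume.restrict Ωᶜ).withDensity fun x => ENNReal.ofReal (β x)).map Function.diag

lemma lintegral_energyMeasure (hβ : Measurable β) {G : Eucl N × Eucl N → ℝ≥0∞}
    (hG : Measurable G) :
    ∫⁻ p, G p ∂energyMeasure Ω β = (∫⁻ p in Qset Ω, pairWeight p * G p)
      + (∫⁻ x in Ω, G (x, x)) + ∫⁻ x in Ωᶜ, ENNReal.ofReal (β x) * G (x, x) := by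
  rw [energyMeasure, lintegral_add_measure, lintegral_add_measure,
    lintegral_withDensity_eq_lintegral_mul _ measurable_pairWeight hG,
    lintegral_map hG measurable_diag, lintegral_map hG measurable_diag,
    lintegral_withDensity_eq_lintegral_mul _ hβ.ennreal_ofReal
      (g := fun x => G (Function.diag x)) (hG.comp measurable_diag)]
  rfl

lemma integral_energyMeasure (hβ : Measurable β) {G : Eucl N × Eucl N → ℝ} (hGm : Measurable G)
    (hG : Integrable G (energyMeasure Ω β)) :
    ∫ p, G p ∂energyMeasure Ω β = (∫ p in Qset Ω, (pairWeight p).toReal * G p)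
      + (∫ x in Ω, G (x, x)) + ∫ x in Ωᶜ, (ENNReal.ofReal (β x)).toReal * G (x, x) := by
  rw [energyMeasure] at hG
  obtain ⟨h₁₂, h₃⟩ := integrable_add_measure.1 hG
  obtain ⟨h₁, h₂⟩ := integrable_add_measure.1 h₁₂
  rw [energyMeasure, integral_add_measure h₁₂ h₃, integral_add_measure h₁ h₂,
    integral_withDensity_eq_integral_toReal_smul measurable_pairWeight
      (.of_forall fun _ => ENNReal.ofReal_lt_top),
    integral_map measurable_diag.aemeasurable hGm.aestronglyMeasurable,
    integral_map measurable_diag.aemeasurable hGm.aestronglyMeasurable,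
    integral_withDensity_eq_integral_toReal_smul hβ.ennreal_ofReal
      (.of_forall fun _ => ENNReal.ofReal_lt_top)]
  rfl

lemma ae_energyMeasure_of_ae {P : Eucl N × Eucl N → Prop} (hP : MeasurableSet {p | P p})
    (hoff : ∀ᵐ p : Eucl N × Eucl N, P p) (hdiag : ∀ᵐ x : Eucl N, P (x, x)) :
    ∀ᵐ p ∂energyMeasure Ω β, P p := by
  rw [energyMeasure, ae_add_measure_iff, ae_add_measure_iff,
    ae_map_iff measurable_diag.aemeasurable hP, ae_map_iff measurable_diag.aemeasurable hP]
  exact ⟨⟨(withDensity_absolutelyContinuous _ _).ae_le (ae_restrict_of_ae hoff),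
    ae_restrict_of_ae hdiag⟩,
    (withDensity_absolutelyContinuous _ _).ae_le (ae_restrict_of_ae hdiag)⟩

lemma ae_restrict_diag_of_ae_energyMeasure {P : Eucl N × Eucl N → Prop}
    (h : ∀ᵐ p ∂energyMeasure Ω β, P p) : ∀ᵐ x ∂volume.restrict Ω, P (x, x) := by
  rw [energyMeasure, ae_add_measure_iff, ae_add_measure_iff] at h
  exact ae_of_ae_map measurable_diag.aemeasurable h.1.2

lemma exists_ae_compl_of_ae_energyMeasure (hΩo : IsOpen Ω) (hΩne : Ω.Nonempty)
    {P : Eucl N × Eucl N → Prop} (h : ∀ᵐ p ∂energyMeasure Ω β, P p) :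
    ∃ x, P (x, x) ∧ ∀ᵐ y ∂volume.restrict Ωᶜ, x ≠ y ∧ P (x, y) := by
  have hdiag := ae_restrict_diag_of_ae_energyMeasure h
  rw [energyMeasure, ae_add_measure_iff, ae_add_measure_iff,
    ae_withDensity_iff measurable_pairWeight] at h
  have hsub : Ω ×ˢ Ωᶜ ⊆ Qset Ω := fun p hp hp' => hp'.1 hp.1
  have hprod := ae_restrict_of_ae_restrict_of_subset hsub h.1.1
  rw [Measure.volume_eq_prod, ← Measure.prod_restrict] at hprod
  have : (ae (volume.restrict Ω)).NeBot :=
    ae_restrict_neBot.2 (hΩo.measure_pos volume hΩne).ne'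
  obtain ⟨x, hx, hxx, hxΩ⟩ := ((Measure.ae_ae_of_ae_prod hprod).and
    (hdiag.and (ae_restrict_mem hΩo.measurableSet))).exists
  refine ⟨x, hxx, ?_⟩
  filter_upwards [hx, ae_restrict_mem hΩo.measurableSet.compl] with y hy hyΩ
  have hxy : x ≠ y := fun h => hyΩ (h ▸ hxΩ)
  exact ⟨hxy, hy (pairWeight_ne_zero hxy)⟩

-- Outside `Ω` the values are recovered from the difference quotients to one point of `Ω`.
lemma ae_exists_tendsto_of_fracGrad (hΩo : IsOpen Ω) (hΩne : Ω.Nonempty) {g : ℕ → Eucl N → ℝ}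
    (h : ∀ᵐ p ∂energyMeasure Ω β, ∃ l, Tendsto (fun i => fracGrad s (g i) p) atTop (nhds l)) :
    ∀ᵐ x : Eucl N, ∃ l, Tendsto (fun i => g i x) atTop (nhds l) := by
  refine ae_of_ae_restrict_of_ae_restrict_compl Ω
    (by simpa only [fracGrad_diag] using ae_restrict_diag_of_ae_energyMeasure h) ?_
  obtain ⟨x, ⟨l, hl⟩, hx⟩ := exists_ae_compl_of_ae_energyMeasure hΩo hΩne h
  simp only [fracGrad_diag] at hl
  filter_upwards [hx] with y ⟨hxy, l', hl'⟩
  have hdist : 0 < dist x y ^ s := Real.rpow_pos_of_pos (dist_pos.2 hxy) s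
  refine ⟨l - l' * dist x y ^ s, (hl.sub (hl'.mul_const (dist x y ^ s))).congr fun i => ?_⟩
  rw [fracGrad_of_ne s (g i) (p := (x, y)) hxy, Du, div_mul_cancel₀ _ hdist.ne', sub_sub_cancel]

lemma ae_tendsto_fracGrad {g : ℕ → Eucl N → ℝ} (hg : ∀ i, Measurable (g i)) (hu : Measurable u)
    (h : ∀ᵐ x : Eucl N, Tendsto (fun i => g i x) atTop (nhds (u x))) :
    ∀ᵐ p ∂energyMeasure Ω β, Tendsto (fun i => fracGrad s (g i) p) atTop
      (nhds (fracGrad s u p)) := by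
  refine ae_energyMeasure_of_ae ?_ ?_ (by simpa only [fracGrad_diag] using h)
  · exact measurableSet_tendsto_fun (fun i => measurable_fracGrad (hg i)) (measurable_fracGrad hu)
  · rw [Measure.volume_eq_prod]
    filter_upwards [Measure.quasiMeasurePreserving_fst.ae h,
      Measure.quasiMeasurePreserving_snd.ae h] with p h₁ h₂
    by_cases hp : p.1 = p.2
    · simpa only [fracGrad, LinearMap.coe_mk, AddHom.coe_mk, if_pos hp] using h₁
    · simpa only [fracGrad_of_ne s _ hp, Du] using (h₁.sub h₂).div_const _

lemma isAEClosed_fracGrad (hΩo : IsOpen Ω) (hΩne : Ω.Nonempty) :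
    IsAEClosed (fracGrad s) (energyMeasure Ω β) (volume.restrict Ω) := by
  intro g hg h
  obtain ⟨u, hu, hgu⟩ := measurable_limit_of_tendsto_metrizable_ae
    (fun i => (hg i).aemeasurable) (ae_exists_tendsto_of_fracGrad hΩo hΩne h)
  exact ⟨u, hu, measurable_fracGrad hu, ae_tendsto_fracGrad hg hu hgu, ae_restrict_of_ae hgu⟩

end FractionalGradient

section NeumannRobin

variable {a : Eucl N → Eucl N → ℝ → ℝ} {φm φp : ℝ} {Ω : Set (Eucl N)} {β u v : Eucl N → ℝ} {s : ℝ}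

/-- The densities `φ_{x,y}` as a family indexed by pairs of points. The primitive of this family at
`(x, y)` is `PhiF a x y`. -/
def pairDensity (a : Eucl N → Eucl N → ℝ → ℝ) (p : Eucl N × Eucl N) (t : ℝ) : ℝ :=
  phiF a p.1 p.2 t

lemma odd_phiF (a : Eucl N → Eucl N → ℝ → ℝ) (x y : Eucl N) : (phiF a x y).Odd := fun t => by
  by_cases ht : t = 0 <;> simp [phiF, ht]

lemma measurable_uncurry_pairDensity
    (ha : Measurable fun p : Eucl N × Eucl N × ℝ => a p.1 p.2.1 p.2.2) :
    Measurable (Function.uncurry (pairDensity a)) :=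
  .ite (measurableSet_eq_fun measurable_snd measurable_const) measurable_const
    ((ha.comp (by fun_prop : Measurable fun z : (Eucl N × Eucl N) × ℝ =>
      (z.1.1, z.1.2, |z.2|))).mul measurable_snd)

lemma PhiF_pos {x y : Eucl N} (hmono : StrictMono (phiF a x y)) (hcont : Continuous (phiF a x y))
    {t : ℝ} (ht : 0 < t) : 0 < PhiF a x y t :=
  intervalIntegral.intervalIntegral_pos_of_pos_on (hcont.intervalIntegrable _ _)
    (fun _ hτ => (odd_phiF a x y).map_zero ▸ hmono hτ.1) ht

lemma isMusielakOrlicz_pairDensity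
    (ha : Measurable fun p : Eucl N × Eucl N × ℝ => a p.1 p.2.1 p.2.2)
    (hmono : ∀ x y, StrictMono (phiF a x y)) (hcont : ∀ x y, Continuous (phiF a x y))
    (hΦ1 : ∀ x y t, 0 < t →
      φm ≤ t * phiF a x y t / PhiF a x y t ∧ t * phiF a x y t / PhiF a x y t ≤ φp) :
    IsMusielakOrlicz (pairDensity a) φm φp where
  measurable := measurable_uncurry_pairDensity ha
  odd p := odd_phiF a p.1 p.2
  strictMono p := hmono p.1 p.2
  continuous p := hcont p.1 p.2
  mul_primitive_le p t ht := by
    rcases ht.eq_or_lt with rfl | ht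
    · simp [primitive_zero]
    · exact (le_div_iff₀ (PhiF_pos (hmono p.1 p.2) (hcont p.1 p.2) ht)).1 (hΦ1 p.1 p.2 t ht).1
  mul_le_mul_primitive p t ht := by
    rcases ht.eq_or_lt with rfl | ht
    · simp [primitive_zero]
    · exact (div_le_iff₀ (PhiF_pos (hmono p.1 p.2) (hcont p.1 p.2) ht)).1 (hΦ1 p.1 p.2 t ht).2

lemma Ku_eq_phiF (a : Eucl N → Eucl N → ℝ → ℝ) (s : ℝ) (u : Eucl N → ℝ) {p : Eucl N × Eucl N}
    (hp : p.1 ≠ p.2) : Ku a s u p = phiF a p.1 p.2 (Du s u p) := by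
  have hdist : dist p.1 p.2 ^ s ≠ 0 := (Real.rpow_pos_of_pos (dist_pos.2 hp) s).ne'
  simp [Ku, phiF, Du, div_eq_zero_iff, sub_eq_zero, hdist]

variable (H : IsMusielakOrlicz (pairDensity a) φm φp)
include H

lemma PhiF_abs (x y : Eucl N) (t : ℝ) : PhiF a x y |t| = PhiF a x y t :=
  H.primitive_abs (x, y) t

lemma modular_fracGrad (hN : N ≠ 0) (hβ : Measurable β) (hu : Measurable u) :
    modular (pairDensity a) (energyMeasure Ω β) (fracGrad s u) =
      ENNReal.ofReal (1 / 2) * modQ a s Ω u 1 + modO a Ω u 1 + modB a Ω β u 1 := by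
  have hΦ : ∀ p t, 0 ≤ primitive (pairDensity a) p t := H.primitive_nonneg
  rw [modular, lintegral_energyMeasure hβ
    (H.measurable_primitive_comp (measurable_fracGrad hu)).ennreal_ofReal, modQ,
    ← lintegral_const_mul' _ _ ENNReal.ofReal_ne_top]
  simp only [fracGrad_diag, ← ENNReal.ofReal_mul' (hΦ _ _)]
  refine congrArg₂ _ (congrArg₂ _ ?_ ?_) ?_
  · refine lintegral_congr fun p => ?_
    by_cases hp : p.1 = p.2
    · simp [pairWeight_eq_zero hN hp, hp, hN]
    · rw [pairWeight, ← ENNReal.ofReal_mul' (hΦ _ _), ← ENNReal.ofReal_mul (by norm_num),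
        fracGrad_of_ne s u hp, one_mul, ← H.primitive_abs, Du, abs_div,
        abs_of_nonneg (by positivity : 0 ≤ dist p.1 p.2 ^ s), div_mul_eq_mul_div, mul_div_assoc]
      rfl
  · simp only [modO, div_one, PhiF_abs H]
    rfl
  · simp only [modB, div_one, PhiF_abs H]
    rfl

lemma modular_fracGrad_le_rhoS (hN : N ≠ 0) (hβ : Measurable β) (hu : Measurable u) :
    modular (pairDensity a) (energyMeasure Ω β) (fracGrad s u) ≤ rhoS a s Ω β u := by
  rw [modular_fracGrad H hN hβ hu, rhoS]
  gcongr
  exact mul_le_of_le_one_left' (ENNReal.ofReal_le_one.2 (by norm_num))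

lemma rhoS_le_two_mul_modular (hN : N ≠ 0) (hβ : Measurable β) (hu : Measurable u) :
    rhoS a s Ω β u ≤ 2 * modular (pairDensity a) (energyMeasure Ω β) (fracGrad s u) := by
  have hhalf : (2 : ℝ≥0∞) * ENNReal.ofReal (1 / 2) = 1 := by
    rw [← ENNReal.ofReal_ofNat 2, ← ENNReal.ofReal_mul zero_le_two]; norm_num
  rw [modular_fracGrad H hN hβ hu, rhoS, mul_add, mul_add, ← mul_assoc, hhalf, one_mul]
  gcongr <;> exact le_mul_of_one_le_left' one_le_two

lemma normM_le_of_two_mul_modular_le (hN : N ≠ 0) (hβ : Measurable β) (hφm : 0 < φm)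
    (hu : Measurable u) {K : ℝ} (hK : 1 ≤ K)
    (hI : 2 * modular (pairDensity a) (energyMeasure Ω β) (fracGrad s u) ≤ ENNReal.ofReal K) :
    normM a s Ω β u ≤ ENNReal.ofReal (K ^ (1 / φm)) := by
  set c := (K ^ (1 / φm))⁻¹ with hc
  have hK0 : 0 < K := one_pos.trans_le hK
  have hc1 : c ≤ 1 := inv_le_one_of_one_le₀ (Real.one_le_rpow hK (by positivity))
  have hcp : c ^ φm = K⁻¹ := by
    rw [hc, Real.inv_rpow (by positivity), ← Real.rpow_mul hK0.le, one_div_mul_cancel hφm.ne',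
      Real.rpow_one]
  refine sInf_le ⟨K ^ (1 / φm), by positivity, rfl, ?_⟩
  calc rhoS a s Ω β (fun x => u x / K ^ (1 / φm)) = rhoS a s Ω β (c • u) := by
        congr 1; ext x; simp [hc, div_eq_inv_mul]
    _ ≤ 2 * (ENNReal.ofReal (c ^ φm)
          * modular (pairDensity a) (energyMeasure Ω β) (fracGrad s u)) := by
        refine (rhoS_le_two_mul_modular H hN hβ (hu.const_smul c)).trans ?_
        rw [map_smul]
        gcongr
        exact H.modular_smul_le_of_le_one (by positivity) hc1 _
    _ ≤ ENNReal.ofReal K⁻¹ * ENNReal.ofReal K := by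
        rw [hcp, mul_left_comm]; gcongr
    _ = 1 := by
        rw [← ENNReal.ofReal_mul (by positivity), inv_mul_cancel₀ hK0.ne', ENNReal.ofReal_one]

lemma mem_XsetM_iff_mem_energySpace (hN : N ≠ 0) (hβ : Measurable β) (hφm : 0 < φm) :
    u ∈ XsetM a s Ω β ↔ u ∈ H.energySpace (energyMeasure Ω β) (fracGrad s) := by
  constructor
  · rintro ⟨hu, ⟨l, hl, h⟩, -⟩
    have hmem : l⁻¹ • u ∈ H.energySpace (energyMeasure Ω β) (fracGrad s) := by
      have hul : (fun x => u x / l) = l⁻¹ • u := by ext x; simp [div_eq_inv_mul]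
      rw [hul] at h
      exact ⟨hu.const_smul _, measurable_fracGrad (hu.const_smul _),
        (modular_fracGrad_le_rhoS H hN hβ (hu.const_smul _)).trans_lt h⟩
    simpa [smul_smul, hl.ne'] using Submodule.smul_mem _ l hmem
  · rintro ⟨hu, -, hI⟩
    have hfin := ENNReal.mul_lt_top ENNReal.ofNat_lt_top hI (a := 2)
    refine ⟨hu, ⟨1, one_pos, ?_⟩, ?_⟩
    · simp only [div_one]
      exact (rhoS_le_two_mul_modular H hN hβ hu).trans_lt hfin
    · have hK := (ENNReal.ofReal_toReal hfin.ne).ge.trans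
        (ENNReal.ofReal_le_ofReal (le_max_right 1 _))
      exact (normM_le_of_two_mul_modular_le H hN hβ hφm hu (le_max_left _ _) hK).trans_lt
        ENNReal.ofReal_lt_top

lemma Jlam_eq_energy (hN : N ≠ 0) (hβ : Measurable β)
    (hu : u ∈ H.energySpace (energyMeasure Ω β) (fracGrad s)) (f : Eucl N → ℝ → ℝ) (lam : ℝ) :
    Jlam a s Ω β f lam u =
      energy (pairDensity a) (energyMeasure Ω β) (fracGrad s) f (volume.restrict Ω) lam u := by
  have hfin := hu.2.2
  rw [energy]
  rw [modular_fracGrad H hN hβ hu.1] at hfin ⊢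
  obtain ⟨hQO, hB⟩ := ENNReal.add_lt_top.1 hfin
  obtain ⟨hQ, hO⟩ := ENNReal.add_lt_top.1 hQO
  rw [ENNReal.toReal_add hQO.ne hB.ne, ENNReal.toReal_add hQ.ne hO.ne, ENNReal.toReal_mul,
    ENNReal.toReal_ofReal (by norm_num)]
  rfl

lemma Aform_eq_integral (hN : N ≠ 0) (hβ : Measurable β)
    (hβ0 : ∀ᵐ x ∂(volume.restrict Ωᶜ), 0 ≤ β x)
    (hu : u ∈ H.energySpace (energyMeasure Ω β) (fracGrad s))
    (hv : v ∈ H.energySpace (energyMeasure Ω β) (fracGrad s)) :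
    Aform a s Ω β u v =
      ∫ p, pairDensity a p (fracGrad s u p) * fracGrad s v p ∂energyMeasure Ω β := by
  have hphi : ∀ x t, pairDensity a (x, x) t = a x x |t| * t := fun x t => by
    simp only [pairDensity, phiF]; split_ifs with h <;> simp [h]
  rw [integral_energyMeasure hβ (G := fun p => pairDensity a p (fracGrad s u p) * fracGrad s v p)
    ((H.measurable_comp hu.2.1).mul hv.2.1) (H.integrable_mul hu.2 hv.2), Aform,
    ← integral_const_mul]
  simp only [fracGrad_diag, hphi]
  refine congrArg₂ _ (congrArg₂ _ ?_ rfl) ?_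
  · refine integral_congr_ae (.of_forall fun p => ?_)
    by_cases hp : p.1 = p.2
    · simp [pairWeight_eq_zero hN hp, hp, hN]
    · simp only [fracGrad_of_ne s _ hp, Ku_eq_phiF a s u hp, pairDensity, pairWeight]
      rw [ENNReal.toReal_ofReal (by positivity)]
      ring
  · refine integral_congr_ae ?_
    filter_upwards [hβ0] with x hx
    rw [ENNReal.toReal_ofReal hx]

end NeumannRobin

section Bump

lemma integrable_min_one_norm_div_rpow {V : Type*} [NormedAddCommGroup V] [NormedSpace ℝ V]
    [FiniteDimensional ℝ V] [Nontrivial V] [MeasurableSpace V] [BorelSpace V] (μ : Measure V)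
    [μ.IsAddHaarMeasure] {s p : ℝ} (hs : s ∈ Ioo 0 1) (hp : 0 < p) :
    Integrable (fun h : V => (min 1 ‖h‖ / ‖h‖ ^ s) ^ p / ‖h‖ ^ Module.finrank ℝ V) μ := by
  set n := Module.finrank ℝ V
  have hn : n ≠ 0 := Module.finrank_pos.ne'
  have hpow : ∀ y : ℝ, 0 < y → ∀ e : ℝ, y ^ (n - 1) * ((y ^ e) ^ p / y ^ n) = y ^ (e * p - 1) :=
    fun y hy e => by
      rw [← Real.rpow_mul hy.le, Real.rpow_sub_one hy.ne', mul_div_left_comm,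
        ← mul_pow_sub_one hn y]
      field_simp
  rw [integrable_fun_norm_addHaar μ (f := fun r => (min 1 r / r ^ s) ^ p / r ^ n),
    ← Ioc_union_Ioi_eq_Ioi (zero_le_one' ℝ)]
  refine IntegrableOn.union ?_ ?_
  · have hnear : IntegrableOn (fun y : ℝ => y ^ ((1 - s) * p - 1)) (Ioc 0 1) :=
      (intervalIntegrable_iff_integrableOn_Ioc_of_le zero_le_one).1 <|
        intervalIntegral.intervalIntegrable_rpow' (by nlinarith [hs.2])
    refine hnear.congr_fun (fun y hy => ?_) measurableSet_Ioc
    beta_reduce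
    rw [← hpow y hy.1, Real.rpow_one_sub' hy.1.le (sub_pos.2 hs.2).ne', smul_eq_mul,
      min_eq_right hy.2]
  · have hfar : IntegrableOn (fun y : ℝ => y ^ (-s * p - 1)) (Ioi 1) :=
      integrableOn_Ioi_rpow_of_lt (by nlinarith [hs.1]) one_pos
    refine hfar.congr_fun (fun y hy => ?_) measurableSet_Ioi
    have hy0 : 0 < y := one_pos.trans hy
    beta_reduce
    rw [← hpow y hy0, Real.rpow_neg hy0.le, smul_eq_mul, min_eq_left (le_of_lt hy), one_div]

lemma lintegral_dist_Qset_lt_top {Ω : Set (Eucl N)} (hΩ : volume Ω < ⊤) {g : ℝ → ℝ≥0∞}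
    (hg : Measurable g) (hfin : ∫⁻ h : Eucl N, g ‖h‖ < ⊤) :
    ∫⁻ p in Qset Ω, g (dist p.1 p.2) < ⊤ := by
  have hQ : Qset Ω = Ω ×ˢ univ ∪ univ ×ˢ Ω := by
    rw [Qset, compl_prod_eq_union, compl_compl]
  have hm : Measurable fun p : Eucl N × Eucl N => g (dist p.1 p.2) := hg.comp (by fun_prop)
  have hleft : ∀ x : Eucl N, ∫⁻ y, g (dist x y) = ∫⁻ h : Eucl N, g ‖h‖ := fun x => by
    simpa only [dist_eq_norm] using lintegral_sub_left_eq_self (fun h : Eucl N => g ‖h‖) x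
  rw [hQ]
  refine (lintegral_union_le _ _ _).trans_lt (ENNReal.add_lt_top.2 ⟨?_, ?_⟩) <;>
    rw [Measure.volume_eq_prod, ← Measure.prod_restrict, Measure.restrict_univ]
  · rw [lintegral_prod _ hm.aemeasurable]
    simpa [hleft] using ENNReal.mul_lt_top hfin hΩ
  · rw [lintegral_prod_symm _ hm.aemeasurable]
    simpa [dist_comm, hleft] using ENNReal.mul_lt_top hfin hΩ

variable {a : Eucl N → Eucl N → ℝ → ℝ} {φm φp : ℝ} {Ω : Set (Eucl N)} {β u : Eucl N → ℝ} {s C : ℝ}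

variable (H : IsMusielakOrlicz (pairDensity a) φm φp)
include H

-- The factor `min 1 d` combines the Lipschitz bound, which tames the singularity at the diagonal,
-- with the uniform bound, which gives decay at infinity.
lemma PhiF_div_rpow_le (hC : ∀ x y, PhiF a x y 1 ≤ C) (hs : s ∈ Icc 0 1) (x y : Eucl N)
    {t d : ℝ} (hd : 0 < d) (ht : |t| ≤ min 1 d) :
    PhiF a x y (t / d ^ s) ≤ C * (min 1 d / d ^ s) ^ φm := by
  set e := min 1 d / d ^ s
  have he0 : 0 < e := by positivity
  have he1 : e ≤ 1 := by
    rw [div_le_one (by positivity)]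
    rcases le_total d 1 with hd1 | hd1
    · rw [min_eq_right hd1]
      exact Real.self_le_rpow_of_le_one hd.le hd1 hs.2
    · rw [min_eq_left hd1]
      exact Real.one_le_rpow hd1 hs.1
  calc PhiF a x y (t / d ^ s) ≤ PhiF a x y (e * 1) := by
        refine H.primitive_le_primitive (y := (x, y)) ?_
        rw [mul_one, abs_div, abs_of_pos he0, abs_of_nonneg (by positivity : 0 ≤ d ^ s)]
        exact div_le_div_of_nonneg_right ht (by positivity)
    _ ≤ e ^ φm * PhiF a x y 1 := H.primitive_mul_le_of_le_one (y := (x, y)) he0 he1 1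
    _ ≤ C * e ^ φm := by
        rw [mul_comm C]
        gcongr
        exact hC x y

lemma modQ_lt_top (hN : N ≠ 0) (hC : ∀ x y, PhiF a x y 1 ≤ C) (hs : s ∈ Ioo 0 1) (hφm : 0 < φm)
    (hΩ : volume Ω < ⊤) (hosc : ∀ x y, |u x - u y| ≤ min 1 (dist x y)) :
    modQ a s Ω u 1 < ⊤ := by
  have : Nonempty (Fin N) := Fin.pos_iff_nonempty.1 (Nat.pos_of_ne_zero hN)
  set k : ℝ → ℝ := fun d => (min 1 d / d ^ s) ^ φm / d ^ N with hk
  have hint : ∫⁻ h : Eucl N, ENNReal.ofReal (k ‖h‖) < ⊤ := by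
    have h := (integrable_min_one_norm_div_rpow (volume : Measure (Eucl N)) hs hφm).lintegral_lt_top
    rwa [finrank_euclideanSpace_fin] at h
  have hmeas : Measurable fun d => ENNReal.ofReal (k d) := by fun_prop
  refine lt_of_le_of_lt ?_ (ENNReal.mul_lt_top (ENNReal.ofReal_lt_top (r := C))
    (lintegral_dist_Qset_lt_top hΩ hmeas hint))
  rw [modQ, ← lintegral_const_mul' _ _ ENNReal.ofReal_ne_top]
  refine lintegral_mono fun p => ?_
  rcases (dist_nonneg (x := p.1) (y := p.2)).eq_or_lt with hd | hd
  · simp [← hd, hN]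
  · have hk0 : 0 ≤ k (dist p.1 p.2) := by positivity
    rw [← ENNReal.ofReal_mul' hk0, one_mul, Real.rpow_natCast, hk, ← mul_div_assoc]
    gcongr
    exact PhiF_div_rpow_le H hC ⟨hs.1.le, hs.2.le⟩ _ _ hd (by rw [abs_abs]; exact hosc _ _)

lemma mem_energySpace_of_lipschitz (hN : N ≠ 0) (hβ : Measurable β)
    (hC : ∀ x y, PhiF a x y 1 ≤ C) (hs : s ∈ Ioo 0 1) (hφm : 0 < φm) (hΩo : IsOpen Ω)
    (hΩ : volume Ω < ⊤) (hu : LipschitzWith 1 u) (hu0 : ∀ x, 0 ≤ u x) (hu1 : ∀ x, u x ≤ 1)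
    (hsupp : ∀ x ∉ Ω, u x = 0) :
    u ∈ H.energySpace (energyMeasure Ω β) (fracGrad s) := by
  have hum : Measurable u := hu.continuous.measurable
  have hosc : ∀ x y, |u x - u y| ≤ min 1 (dist x y) := fun x y =>
    le_min (abs_sub_le_of_nonneg_of_le (hu0 x) (hu1 x) (hu0 y) (hu1 y))
      (by simpa [Real.dist_eq] using hu.dist_le_mul x y)
  have hO : modO a Ω u 1 < ⊤ := by
    refine (lintegral_mono (g := fun _ => ENNReal.ofReal C) fun x => ?_).trans_lt
      (by simpa using ENNReal.mul_lt_top ENNReal.ofReal_lt_top hΩ)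
    refine ENNReal.ofReal_le_ofReal (le_trans (H.primitive_le_primitive (y := (x, x)) ?_) (hC x x))
    rw [div_one, abs_abs, abs_one, abs_of_nonneg (hu0 x)]
    exact hu1 x
  have hB : modB a Ω β u 1 = 0 := by
    refine setLIntegral_eq_zero hΩo.measurableSet.compl fun x hx => ?_
    simp [hsupp x hx, PhiF]
  refine ⟨hum, measurable_fracGrad hum, ?_⟩
  rw [modular_fracGrad H hN hβ hum, hB, add_zero]
  exact ENNReal.add_lt_top.2 ⟨ENNReal.mul_lt_top ENNReal.ofReal_lt_top
    (modQ_lt_top H hN hC hs hφm hΩ hosc), hO⟩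

lemma exists_mem_energySpace_integral_rpow_pos (hN : N ≠ 0) (hβ : Measurable β)
    (hC : ∀ x y, PhiF a x y 1 ≤ C) (hs : s ∈ Ioo 0 1) (hφm : 0 < φm) (hΩo : IsOpen Ω)
    (hΩne : Ω.Nonempty) (hΩ : volume Ω < ⊤) {q : Eucl N → ℝ}
    (hint : ∀ v ∈ H.energySpace (energyMeasure Ω β) (fracGrad s),
      IntegrableOn (fun x => |v x| ^ q x) Ω) :
    ∃ v ∈ H.energySpace (energyMeasure Ω β) (fracGrad s), 0 < ∫ x in Ω, |v x| ^ q x := by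
  obtain ⟨x₀, hx₀⟩ := hΩne
  obtain ⟨r, hr, hball⟩ := Metric.isOpen_iff.1 hΩo x₀ hx₀
  set v : Eucl N → ℝ := fun x => max 0 (min 1 r - dist x x₀)
  have hlip : LipschitzWith 1 v := .const_max (by
    simpa using (LipschitzWith.const (min 1 r)).sub (LipschitzWith.dist_left x₀)) 0
  have hsupp : ∀ x ∉ Ω, v x = 0 := fun x hx => max_eq_left <| sub_nonpos.2 <|
    (min_le_right 1 r).trans (not_lt.1 fun h => hx (hball h))
  have hv : v ∈ H.energySpace (energyMeasure Ω β) (fracGrad s) :=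
    mem_energySpace_of_lipschitz H hN hβ hC hs hφm hΩo hΩ hlip (fun x => le_max_left _ _)
      (fun x => max_le zero_le_one (by linarith [min_le_left 1 r, dist_nonneg (x := x) (y := x₀)]))
      hsupp
  refine ⟨v, hv, (setIntegral_pos_iff_support_of_nonneg_ae
    (.of_forall fun x => by positivity) (hint v hv)).2 ?_⟩
  refine (Metric.measure_ball_pos volume x₀ (lt_min one_pos hr)).trans_le (measure_mono ?_)
  intro x hx
  have hx' : 0 < v x := lt_max_of_lt_right (sub_pos.2 hx)
  exact ⟨(Real.rpow_pos_of_pos (abs_pos.2 hx'.ne') _).ne',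
    hball (Metric.ball_subset_ball (min_le_right 1 r) hx)⟩

end Bump

section Embedding

variable {a : Eucl N → Eucl N → ℝ → ℝ} {φm φp : ℝ} {Ω : Set (Eucl N)} {β u q : Eucl N → ℝ}
  {s qp c K : ℝ}

lemma IsVariableExponent.lintegral_rpow_le_of_normq_lt
    (E : IsVariableExponent (volume.restrict Ω) q qp) {L : ℝ} (hL : 1 ≤ L)
    (h : normq Ω q u < ENNReal.ofReal L) :
    ∫⁻ x in Ω, ENNReal.ofReal (|u x| ^ q x) ≤ ENNReal.ofReal (L ^ qp) := by
  obtain ⟨_, ⟨l, hl, rfl, hle⟩, hlL⟩ := sInf_lt_iff.1 h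
  exact E.lintegral_rpow_le_of_lintegral_div_le hl
    ((ENNReal.ofReal_lt_ofReal_iff (one_pos.trans_le hL)).1 hlL).le hL hle

variable (H : IsMusielakOrlicz (pairDensity a) φm φp)
include H

lemma normM_le_of_modular_le (hN : N ≠ 0) (hβ : Measurable β) (hφm : 0 < φm)
    (hu : u ∈ H.energySpace (energyMeasure Ω β) (fracGrad s)) (hK : 1 ≤ K)
    (hI : (modular (pairDensity a) (energyMeasure Ω β) (fracGrad s u)).toReal ≤ K) :
    normM a s Ω β u ≤ ENNReal.ofReal ((2 * K) ^ (1 / φm)) := by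
  refine normM_le_of_two_mul_modular_le H hN hβ hφm hu.1 (by linarith) ?_
  rw [ENNReal.ofReal_mul zero_le_two, ENNReal.ofReal_ofNat]
  gcongr
  exact (ENNReal.le_ofReal_iff_toReal_le hu.2.2.ne (by linarith)).2 hI

lemma mem_space_of_normq_le_normM (E : IsVariableExponent (volume.restrict Ω) q qp)
    (hN : N ≠ 0) (hβ : Measurable β) (hφm : 0 < φm) (hqp : 0 ≤ qp) (hc : 0 ≤ c)
    (hemb : ∀ u ∈ XsetM a s Ω β, normq Ω q u ≤ ENNReal.ofReal c * normM a s Ω β u)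
    (hu : u ∈ H.energySpace (energyMeasure Ω β) (fracGrad s)) (hK : 1 ≤ K)
    (hI : (modular (pairDensity a) (energyMeasure Ω β) (fracGrad s u)).toReal ≤ K) :
    u ∈ E.space ∧ ∫ x in Ω, |u x| ^ q x ≤ (1 + c * 2 ^ (1 / φm)) ^ qp * K ^ (qp / φm) := by
  have hK0 : 0 < K := one_pos.trans_le hK
  have hnorm : normq Ω q u < ENNReal.ofReal (1 + c * (2 * K) ^ (1 / φm)) :=
    calc normq Ω q u ≤ ENNReal.ofReal c * ENNReal.ofReal ((2 * K) ^ (1 / φm)) :=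
          (hemb u ((mem_XsetM_iff_mem_energySpace H hN hβ hφm).2 hu)).trans <| by
            gcongr; exact normM_le_of_modular_le H hN hβ hφm hu hK hI
      _ = ENNReal.ofReal (c * (2 * K) ^ (1 / φm)) := (ENNReal.ofReal_mul hc).symm
      _ < _ := (ENNReal.ofReal_lt_ofReal_iff (by positivity)).2 (lt_one_add _)
  have hle : (1 + c * (2 * K) ^ (1 / φm)) ^ qp ≤
      (1 + c * 2 ^ (1 / φm)) ^ qp * K ^ (qp / φm) :=
    calc (1 + c * (2 * K) ^ (1 / φm)) ^ qp ≤ ((1 + c * 2 ^ (1 / φm)) * K ^ (1 / φm)) ^ qp := by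
          gcongr
          rw [Real.mul_rpow zero_le_two hK0.le]
          linarith [Real.one_le_rpow hK (one_div_pos.2 hφm).le]
      _ = _ := by
          rw [Real.mul_rpow (by positivity) (by positivity), ← Real.rpow_mul hK0.le,
            one_div_mul_eq_div]
  have hL : 1 ≤ 1 + c * (2 * K) ^ (1 / φm) := le_add_of_nonneg_right (by positivity)
  exact E.mem_space_of_lintegral_le (by positivity) hu.1 <|
    (E.lintegral_rpow_le_of_normq_lt hL hnorm).trans (ENNReal.ofReal_le_ofReal hle)

lemma exists_subseq_tendsto_integral_rpow (hN : N ≠ 0) (hβ : Measurable β) (hφm : 0 < φm)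
    (hcpt : ∀ un : ℕ → Eucl N → ℝ, (∀ n, un n ∈ XsetM a s Ω β) →
      (∃ B : ℝ, ∀ n, normM a s Ω β (un n) ≤ ENNReal.ofReal B) →
      ∃ ns : ℕ → ℕ, StrictMono ns ∧ ∃ w ∈ XsetM a s Ω β,
        Tendsto (fun k => ∫ x in Ω, |un (ns k) x - w x| ^ q x) atTop (nhds 0))
    {g : ℕ → Eucl N → ℝ} (hg : ∀ n, g n ∈ H.energySpace (energyMeasure Ω β) (fracGrad s))
    (hK : ∀ n, (modular (pairDensity a) (energyMeasure Ω β) (fracGrad s (g n))).toReal ≤ K) :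
    ∃ ns : ℕ → ℕ, StrictMono ns ∧ ∃ w ∈ H.energySpace (energyMeasure Ω β) (fracGrad s),
      Tendsto (fun k => ∫ x in Ω, |g (ns k) x - w x| ^ q x) atTop (nhds 0) := by
  simp only [← mem_XsetM_iff_mem_energySpace H hN hβ hφm] at hg ⊢
  exact hcpt g hg ⟨_, fun n => normM_le_of_modular_le H hN hβ hφm
    ((mem_XsetM_iff_mem_energySpace H hN hβ hφm).1 (hg n)) (le_max_left 1 K)
    ((hK n).trans (le_max_right 1 K))⟩

end Embedding

lemma not_ae_eq_zero_of_Jlam_neg {a : Eucl N → Eucl N → ℝ → ℝ} {s : ℝ} {Ω : Set (Eucl N)}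
    {β u : Eucl N → ℝ} {f : Eucl N → ℝ → ℝ} {lam : ℝ} (hneg : Jlam a s Ω β f lam u < 0) :
    ¬ u =ᵐ[volume] fun _ => (0 : ℝ) := fun hu => by
  have hF : ∫ x in Ω, Ff f x (u x) = 0 := by
    refine integral_eq_zero_of_ae ?_
    filter_upwards [ae_restrict_of_ae hu] with x hx
    simp [Ff, hx]
  rw [Jlam, hF, mul_zero, sub_zero] at hneg
  exact hneg.not_ge (by positivity)

theorem statement14_general
    (N : ℕ) (hN : 1 ≤ N)
    (Ω : Set (Eucl N)) (hΩo : IsOpen Ω) (hΩv : volume Ω < ⊤) (hΩne : Ω.Nonempty)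
    (s : ℝ) (hs : s ∈ Set.Ioo (0 : ℝ) 1)
    (a : Eucl N → Eucl N → ℝ → ℝ)
    (ha : Measurable fun p : Eucl N × Eucl N × ℝ => a p.1 p.2.1 p.2.2)
    (hmono : ∀ x y, StrictMono (phiF a x y))
    (hcont : ∀ x y, Continuous (phiF a x y))
    (β : Eucl N → ℝ) (hβm : Measurable β)
    (hβ0 : ∀ᵐ x ∂(volume.restrict Ωᶜ), 0 ≤ β x)
    (φm φp : ℝ)
    (hΦ1 : ∀ x y t, 0 < t →
      φm ≤ t * phiF a x y t / PhiF a x y t ∧ t * phiF a x y t / PhiF a x y t ≤ φp)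
    (hΦ2 : ∀ x y : Eucl N, ConvexOn ℝ (Set.Ici 0) fun t => PhiF a x y (Real.sqrt t))
    (hΦ3 : ∃ C : ℝ, ∀ x y : Eucl N, PhiF a x y 1 ≤ C)
    (q : Eucl N → ℝ) (qp : ℝ) (E : IsVariableExponent (volume.restrict Ω) q qp)
    (f : Eucl N → ℝ → ℝ) (c₁ c₂ : ℝ) (hc₂ : 0 < c₂)
    (hf : HasPowerGrowth (volume.restrict Ω) q f c₁)
    (hf2 : ∀ᵐ x ∂volume.restrict Ω, ∀ t : ℝ, c₂ * |t| ^ q x ≤ Ff f x t)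
    (hqpφ : qp < φm)
    (c : ℝ) (hc : 0 ≤ c)
    (hemb : ∀ u ∈ XsetM a s Ω β, normq Ω q u ≤ ENNReal.ofReal c * normM a s Ω β u)
    (hcpt : ∀ un : ℕ → Eucl N → ℝ, (∀ n, un n ∈ XsetM a s Ω β) →
      (∃ B : ℝ, ∀ n, normM a s Ω β (un n) ≤ ENNReal.ofReal B) →
      ∃ ns : ℕ → ℕ, StrictMono ns ∧ ∃ w ∈ XsetM a s Ω β,
        Tendsto (fun k => ∫ x in Ω, |un (ns k) x - w x| ^ q x) atTop (nhds 0))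
    (lam : ℝ) (hlam : 0 < lam) :
    ∃ u ∈ XsetM a s Ω β, ¬ (u =ᵐ[volume] (fun _ => (0:ℝ))) ∧
      Jlam a s Ω β f lam u < 0 ∧
      ∀ v ∈ XsetM a s Ω β, Aform a s Ω β u v = lam * ∫ x in Ω, f x (u x) * v x := by
  have hN0 : N ≠ 0 := Nat.one_le_iff_ne_zero.1 hN
  have : NeZero (volume Ω) := ⟨(hΩo.measure_pos volume hΩne).ne'⟩
  have hqp : 0 ≤ qp := zero_le_one.trans E.one_le_bound
  have hφm : 0 < φm := hqp.trans_lt hqpφ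
  have H := isMusielakOrlicz_pairDensity ha hmono hcont hΦ1
  obtain ⟨C, hC⟩ := hΦ3
  have hVE := fun u hu K => mem_space_of_normq_le_normM (u := u) (K := K) H E hN0 hβm hφm hqp hc
    hemb hu
  have hmem : ∀ u ∈ H.energySpace (energyMeasure Ω β) (fracGrad s), u ∈ E.space := fun u hu =>
    (hVE u hu _ (le_max_left 1 _) (le_max_right 1 _)).1
  obtain ⟨v, hv, hpos⟩ := exists_mem_energySpace_integral_rpow_pos H hN0 hβm hC hs hφm hΩo hΩne hΩv
    fun v hv => (hmem v hv).2
  obtain ⟨w, hw, hw_neg⟩ := H.exists_energy_neg hf E hlam hqpφ hc₂ hf2 hv (hmem v hv) hpos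
  obtain ⟨u, hu, hmin⟩ := H.exists_energy_minimizer hf E (fun p => hΦ2 p.1 p.2) hlam.le
    (by positivity) ((div_lt_one hφm).2 hqpφ) hVE
    (fun g K hg hK => by
      obtain ⟨ns, hns, w, hw, hlim⟩ := exists_subseq_tendsto_integral_rpow H hN0 hβm hφm hcpt hg hK
      exact ⟨ns, hns, w, hmem w hw, hlim⟩)
    (isAEClosed_fracGrad hΩo hΩne)
  have hneg : Jlam a s Ω β f lam u < 0 :=
    (Jlam_eq_energy H hN0 hβm hu f lam).trans_lt ((hmin w hw).trans_lt hw_neg)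
  refine ⟨u, (mem_XsetM_iff_mem_energySpace H hN0 hβm hφm).2 hu, not_ae_eq_zero_of_Jlam_neg hneg,
    hneg, fun v hv => ?_⟩
  have hv := (mem_XsetM_iff_mem_energySpace H hN0 hβm hφm).1 hv
  rw [Aform_eq_integral H hN0 hβm hβ0 hu hv]
  exact H.energy_euler_lagrange hf E hmem hu hmin hv

/-- existence of a nontrivial weak solution of the Neumann–Robin problem
for every small `λ > 0`. -/
theorem statement14
    (N : ℕ) (hN : 1 ≤ N)
    (Ω : Set (Eucl N)) (hΩo : IsOpen Ω) (hΩb : Bornology.IsBounded Ω) (hΩne : Ω.Nonempty)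
    (s : ℝ) (hs : s ∈ Set.Ioo (0:ℝ) 1)
    (a : Eucl N → Eucl N → ℝ → ℝ)
    (ha : Measurable fun p : Eucl N × Eucl N × ℝ => a p.1 p.2.1 p.2.2)
    (hmono : ∀ x y, StrictMono (phiF a x y))
    (hcont : ∀ x y, Continuous (phiF a x y))
    (hsurj : ∀ x y, Function.Surjective (phiF a x y))
    (β : Eucl N → ℝ) (hβm : Measurable β)
    (hβb : ∃ C : ℝ, ∀ᵐ x ∂(volume.restrict Ωᶜ), |β x| ≤ C)
    (hβ0 : ∀ᵐ x ∂(volume.restrict Ωᶜ), 0 ≤ β x)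
    (φm φp : ℝ) (hφm : 1 < φm) (hφmp : φm ≤ φp)
    (hΦ1 : ∀ x y t, 0 < t →
      φm ≤ t * phiF a x y t / PhiF a x y t ∧ t * phiF a x y t / PhiF a x y t ≤ φp)
    (hΦ2 : ∀ x y : Eucl N, ConvexOn ℝ (Set.Ici 0) fun t => PhiF a x y (Real.sqrt t))
    (hΦ3 : ∃ C : ℝ, ∀ x y : Eucl N, PhiF a x y 1 ≤ C)
    (hsym : ∀ x y t, a x y t = a y x t)
    (q : Eucl N → ℝ) (hqc : ContinuousOn q (closure Ω)) (hq1 : ∀ x ∈ closure Ω, 1 < q x)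
    (qp : ℝ) (hqp_le : ∀ x ∈ closure Ω, q x ≤ qp)
    (f : Eucl N → ℝ → ℝ)
    (hfmeas : ∀ t : ℝ, Measurable fun x => f x t)
    (hfcont : ∀ x : Eucl N, Continuous fun t => f x t)
    (c₁ c₂ : ℝ) (hc₁ : 0 < c₁) (hc₂ : 0 < c₂)
    (hf1 : ∀ x ∈ Ω, ∀ t : ℝ, |f x t| ≤ c₁ * |t| ^ (q x - 1))
    (hf2 : ∀ x ∈ Ω, ∀ t : ℝ, c₂ * |t| ^ q x ≤ Ff f x t)
    (hqpφ : qp < φm)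
    (c : ℝ) (hc : 0 < c)
    (hemb : ∀ u ∈ XsetM a s Ω β, normq Ω q u ≤ ENNReal.ofReal c * normM a s Ω β u)
    (hcpt : ∀ un : ℕ → Eucl N → ℝ, (∀ n, un n ∈ XsetM a s Ω β) →
      (∃ B : ℝ, ∀ n, normM a s Ω β (un n) ≤ ENNReal.ofReal B) →
      ∃ ns : ℕ → ℕ, StrictMono ns ∧ ∃ w ∈ XsetM a s Ω β,
        Tendsto (fun k => ∫ x in Ω, |un (ns k) x - w x| ^ q x) atTop (nhds 0)) :
    ∃ lamstar : ℝ, 0 < lamstar ∧ ∀ lam : ℝ, 0 < lam → lam < lamstar →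
      ∃ u ∈ XsetM a s Ω β, ¬ (u =ᵐ[volume] (fun _ => (0:ℝ))) ∧
        Jlam a s Ω β f lam u < 0 ∧
        ∀ v ∈ XsetM a s Ω β, Aform a s Ω β u v = lam * ∫ x in Ω, f x (u x) * v x := by
  have hΩ := hΩo.measurableSet
  exact ⟨1, one_pos, fun lam hlam _ => statement14_general N hN Ω hΩo hΩb.measure_lt_top hΩne s hs
    a ha hmono hcont β hβm hβ0 φm φp hΦ1 hΦ2 hΦ3 q qp
    (.of_continuousOn hΩ (hqc.mono subset_closure) (fun x hx => (hq1 x (subset_closure hx)).le)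
      fun x hx => hqp_le x (subset_closure hx))
    f c₁ c₂ hc₂ ⟨hfmeas, hfcont, hc₁.le, ae_restrict_of_forall_mem hΩ hf1⟩
    (ae_restrict_of_forall_mem hΩ hf2) hqpφ c hc.le hemb hcpt lam hlam⟩
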